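/- arXiv:1502.02258 — 3 statements merged into one kernel-verified Lean document; each statement's English description precedes it below -/
import Mathlib

section
/- Let ω ∈ ℝ \ {0} and let f : ℝ → ℂ be Bohr almost periodic such that every frequency ω′ with Fourier coefficient \hat f(ω′) ≠ 0 is a rational multiple of ω. For j ∈ ℕ set L_j := j!/|ω| and let f_j : ℝ → ℂ be the uniform limit of A_{n,L_j}[f] as n → ∞ (which exists and is L_j-periodic). Then f_j converges to f uniformly on ℝ as j → ∞. -/
/-!
The periodizations `f_j` are limits of convex combinations of translates of `f`, and the
translates of an almost periodic function form a totally bounded subset of the Banach space `X` of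
bounded continuous functions, so all `f_j` lie in one compact set. Convergence therefore follows
once every limit point `g` of the sequence is shown to be `f`. Averaging over the lattice `L_j ℤ`
kills the Fourier coefficients at frequencies `ω'` with `ω' L_j` not an integer and preserves the
others; a rational multiple `ω'` of `ω` has `ω' L_j ∈ ℤ` as soon as its denominator divides `j!`,
so every Fourier coefficient of `f_j` is eventually that of `f`. (Only a weaker form of the
vanishing is used: `f_j` has no coefficient where `f` has none.) Hence `g` and `f` have the same
Fourier coefficients, and `g = f` by the uniqueness theorem for almost periodic functions
(`eq_zero_of_fc`); this compactness argument is `tendsto_of_fc`.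

The uniqueness theorem is proved by Gelfand theory. Let `h ≠ 0` be almost periodic with
`h (-x) = conj (h x)`. Convolution by `h` with respect to the mean, `T = conv h`, is a bounded
operator on `X`, symmetric for the form `Mean (φ ψ̄)`. Cauchy-Schwarz together with `Mean |h|² > 0`
shows that `T` is not quasinilpotent (`conv_not_quasinilpotent`). Inside the double commutant of
`T` and the translations `τ_t`, a commutative Banach algebra, there is thus a character `χ` with
`χ T ≠ 0`. As `t ↦ χ (τ_t)` is a bounded continuous character of `ℝ`, it is `exp (2πiωt)` for some
`ω`. The identity `T² = Mean_t (h(t) τ_t T)`, valid in operator norm (`conv_sq`), gives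
`χ T = Mean_t (h(t) exp (2πiωt))`, so `h` has a nonzero Fourier coefficient
(`exists_mean_ne_zero`).

Means are taken along a fixed ultrafilter, for functions which are continuous with totally bounded
range in a Banach space; their existence is then a compactness statement.
-/

open MeasureTheory Filter Topology
open scoped ENNReal NNReal

noncomputable section

/-- `f : ℝ → ℂ` is Bohr almost periodic. -/
def BohrAP (f : ℝ → ℂ) : Prop :=
  Continuous f ∧ ∀ ε : ℝ, 0 < ε → ∃ L : ℝ, 0 < L ∧ ∀ a : ℝ,
    ∃ τ, τ ∈ Set.Icc a (a + L) ∧ ∀ x : ℝ, ‖f (x - τ) - f x‖ < ε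

/-- The Fourier coefficient of `f` at frequency `ω` equals `c`. -/
def HasFourierCoeff (f : ℝ → ℂ) (ω : ℝ) (c : ℂ) : Prop :=
  Tendsto (fun L : ℝ => (2 * (L : ℂ))⁻¹ *
      ∫ x in (-L)..L, f x * Complex.exp (((-(2 * Real.pi * ω * x) : ℝ) : ℂ) * Complex.I))
    atTop (nhds c)

/-- `f'` is a weak derivative of `f` on `ℝ`. -/
def HasWeakDeriv (f f' : ℝ → ℂ) : Prop :=
  LocallyIntegrable f' volume ∧ ∀ x : ℝ, f x = f 0 + ∫ y in (0:ℝ)..x, f' y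

/-- The `S^{1,2}(ℝ)`-norm of `f` (with weak derivative `f'`), valued in `ℝ≥0∞`. -/
def S12 (f f' : ℝ → ℂ) : ℝ≥0∞ :=
  ⨆ y : ℝ, (∫⁻ x in Set.Ioc y (y + 1),
    ((‖f x‖₊ : ℝ≥0∞) ^ 2 + (‖f' x‖₊ : ℝ≥0∞) ^ 2)) ^ (1/2 : ℝ)

/-- The averaging operator `A_{n,L}[f]`. -/
def avgOp (f : ℝ → ℂ) (L : ℝ) (n : ℕ) (x : ℝ) : ℂ :=
  (n : ℂ)⁻¹ * ∑ m ∈ Finset.range n, f (x + m * L)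

/-- `f` is limit periodic: a uniform limit of continuous periodic functions. -/
def LimitPeriodic (f : ℝ → ℂ) : Prop :=
  ∃ g : ℕ → ℝ → ℂ, (∀ j, Continuous (g j)) ∧
    (∀ j, ∃ P : ℝ, 0 < P ∧ Function.Periodic (g j) P) ∧
    TendstoUniformly g f atTop

namespace AlmostPeriodic

/-! ### Means of vector-valued functions -/

/-- A fixed ultrafilter at `+∞`. Averages over `[-L, L]` of functions with totally bounded range
converge along it, so that means exist without a separate ergodic theorem. -/
def U : Ultrafilter ℝ := Ultrafilter.of atTop

lemma U_le : (U : Filter ℝ) ≤ atTop := Ultrafilter.of_le _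

lemma U_pos : ∀ᶠ L : ℝ in (U : Filter ℝ), 0 < L := U_le (eventually_gt_atTop 0)

section Mean

set_option linter.unusedSectionVars false

variable {E E' : Type*} [NormedAddCommGroup E] [NormedSpace ℂ E]
  [NormedAddCommGroup E'] [NormedSpace ℂ E']

/-- The average of `F` over `[-L, L]`. -/
def avg (F : ℝ → E) (L : ℝ) : E := (2 * (L : ℂ))⁻¹ • ∫ x in (-L)..L, F x

/-- The mean of `F`: the limit of its averages along the ultrafilter `U`
(a junk value if that limit does not exist). -/
def Mean (F : ℝ → E) : E := limUnder (U : Filter ℝ) (avg F)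

/-- The class of functions whose means are taken: continuous with totally bounded range. -/
def Good (F : ℝ → E) : Prop := Continuous F ∧ TotallyBounded (Set.range F)

lemma Mean_eq {F : ℝ → E} {c : E} (h : Tendsto (avg F) U (𝓝 c)) : Mean F = c := h.limUnder_eq

lemma avg_mem {F : ℝ → E} (hF : Continuous F) [CompleteSpace E] {L : ℝ} (hL : 0 < L) :
    avg F L ∈ closure (convexHull ℝ (Set.range F)) := by
  have h1 : avg F L = ⨍ x in Set.Ioc (-L) L, F x := by
    rw [setAverage_eq, avg, intervalIntegral.integral_of_le (by linarith),
      ← Complex.coe_smul]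
    congr 1
    rw [measureReal_def, Real.volume_Ioc, ENNReal.toReal_ofReal (by linarith)]
    push_cast
    ring
  rw [h1]
  apply (convex_convexHull ℝ _).set_average_mem_closure
  · rw [Real.volume_Ioc]; simp; linarith
  · rw [Real.volume_Ioc]; simp
  · exact ae_of_all _ fun x => subset_convexHull ℝ _ ⟨x, rfl⟩
  · exact (hF.intervalIntegrable _ _).1

lemma isCompact_hull [CompleteSpace E] {s : Set E} (hs : TotallyBounded s) :
    IsCompact (closure (convexHull ℝ s)) :=
  hs.convexHull.closure.isCompact_of_isClosed isClosed_closure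

lemma Good.tendsto [CompleteSpace E] {F : ℝ → E} (hF : Good F) :
    Tendsto (avg F) U (𝓝 (Mean F)) := by
  obtain ⟨c, -, hc⟩ := (isCompact_hull hF.2).ultrafilter_le_nhds (U.map (avg F)) (by
    rw [le_principal_iff]
    exact U_pos.mono fun L hL => avg_mem hF.1 hL)
  have : Tendsto (avg F) U (𝓝 c) := hc
  rwa [Mean_eq this]

lemma Good.bounded {F : ℝ → E} (hF : Good F) : ∃ C, ∀ t, ‖F t‖ ≤ C := by
  obtain ⟨C, hC⟩ := hF.2.isBounded.exists_norm_le
  exact ⟨C, fun t => hC _ ⟨t, rfl⟩⟩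

lemma good_of_bounded {F : ℝ → ℂ} (hF : Continuous F) {C : ℝ} (hC : ∀ t, ‖F t‖ ≤ C) : Good F :=
  ⟨hF, by
    refine (isCompact_closedBall (0 : ℂ) C).totallyBounded.subset ?_
    rintro _ ⟨t, rfl⟩
    simpa using hC t⟩

lemma Good.net {F : ℝ → E} (hF : Good F) {ε : ℝ} (hε : 0 < ε) :
    ∃ S : Finset ℝ, ∀ t, ∃ s ∈ S, ‖F t - F s‖ < ε := by
  classical
  obtain ⟨T, hT, hfin, hcov⟩ := totallyBounded_iff_subset.1 hF.2 _ (Metric.dist_mem_uniformity hε)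
  have hT' : ∀ y ∈ T, ∃ t, F t = y := fun y hy => hT hy
  choose! g hg using hT'
  refine ⟨hfin.toFinset.image g, fun t => ?_⟩
  have := hcov ⟨t, rfl⟩
  simp only [Set.mem_iUnion] at this
  obtain ⟨y, hy, hty⟩ := this
  refine ⟨g y, Finset.mem_image_of_mem _ (by simpa using hy), ?_⟩
  rw [hg y hy, ← dist_eq_norm]
  exact hty

/-- A function which oscillates no more than a good one is good. -/
lemma Good.dom {F : ℝ → E} (hF : Good F) {G : ℝ → E'} (C : ℝ)
    (h : ∀ s t, ‖G s - G t‖ ≤ C * ‖F s - F t‖) : Good G := by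
  constructor
  · rw [continuous_iff_continuousAt]
    intro t
    rw [ContinuousAt, tendsto_iff_norm_sub_tendsto_zero]
    have h1 : Tendsto (fun s => C * ‖F s - F t‖) (𝓝 t) (𝓝 0) := by
      have h2 : Tendsto (fun s => ‖F s - F t‖) (𝓝 t) (𝓝 0) :=
        tendsto_iff_norm_sub_tendsto_zero.1 hF.1.continuousAt
      simpa using h2.const_mul C
    exact squeeze_zero (fun _ => norm_nonneg _) (fun s => h s t) h1
  · rw [Metric.totallyBounded_iff]
    intro ε hε
    have hC : 0 < |C| + 1 := by positivity
    obtain ⟨S, hS⟩ := hF.net (div_pos hε hC)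
    refine ⟨G '' S, S.finite_toSet.image _, ?_⟩
    rintro _ ⟨t, rfl⟩
    obtain ⟨s, hs, hts⟩ := hS t
    simp only [Set.mem_iUnion]
    refine ⟨G s, ⟨s, hs, rfl⟩, ?_⟩
    rw [Metric.mem_ball, dist_eq_norm]
    rw [lt_div_iff₀ hC] at hts
    have := h t s
    nlinarith [norm_nonneg (F t - F s), le_abs_self C,
      mul_le_mul_of_nonneg_right (le_abs_self C) (norm_nonneg (F t - F s))]

lemma Good.smul {φ : ℝ → ℂ} (hφ : Good φ) {F : ℝ → E} [CompleteSpace E] (hF : Good F) :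
    Good (fun t => φ t • F t) := by
  refine ⟨hφ.1.smul hF.1, ?_⟩
  have h1 : IsCompact (closure (Set.range φ) ×ˢ closure (Set.range F)) :=
    (hφ.2.closure.isCompact_of_isClosed isClosed_closure).prod
      (hF.2.closure.isCompact_of_isClosed isClosed_closure)
  have h2 := h1.image (continuous_smul (M := ℂ) (X := E))
  refine h2.totallyBounded.subset ?_
  rintro _ ⟨t, rfl⟩
  exact ⟨(φ t, F t), ⟨subset_closure ⟨t, rfl⟩, subset_closure ⟨t, rfl⟩⟩, rfl⟩

lemma Good.clm {F : ℝ → E} (hF : Good F) (Λ : E →L[ℂ] E') : Good (fun t => Λ (F t)) := by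
  refine hF.dom ‖Λ‖ fun s t => ?_
  rw [← map_sub]; exact Λ.le_opNorm _

lemma Good.add [CompleteSpace E] {F G : ℝ → E} (hF : Good F) (hG : Good G) : Good (fun t => F t + G t) := by
  refine ⟨hF.1.add hG.1, ?_⟩
  have h1 : IsCompact (closure (Set.range F) ×ˢ closure (Set.range G)) :=
    (hF.2.closure.isCompact_of_isClosed isClosed_closure).prod
      (hG.2.closure.isCompact_of_isClosed isClosed_closure)
  have h2 := h1.image (continuous_add (M := E))
  refine h2.totallyBounded.subset ?_
  rintro _ ⟨t, rfl⟩
  exact ⟨(F t, G t), ⟨subset_closure ⟨t, rfl⟩, subset_closure ⟨t, rfl⟩⟩, rfl⟩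

lemma Mean_clm [CompleteSpace E] [CompleteSpace E'] {F : ℝ → E} (hF : Good F) (Λ : E →L[ℂ] E') :
    Mean (fun t => Λ (F t)) = Λ (Mean F) := by
  apply Mean_eq
  have h1 := (Λ.continuous.tendsto _).comp hF.tendsto
  refine h1.congr fun L => ?_
  simp only [Function.comp, avg, map_smul]
  congr 1
  exact (Λ.intervalIntegral_comp_comm (hF.1.intervalIntegrable _ _)).symm

lemma Mean_add [CompleteSpace E] {F G : ℝ → E} (hF : Good F) (hG : Good G) :
    Mean (fun t => F t + G t) = Mean F + Mean G := by
  apply Mean_eq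
  refine (hF.tendsto.add hG.tendsto).congr fun L => ?_
  simp only [avg]
  rw [intervalIntegral.integral_add (hF.1.intervalIntegrable _ _) (hG.1.intervalIntegrable _ _),
    smul_add]

lemma Mean_const_smul [CompleteSpace E] {F : ℝ → E} (hF : Good F) (c : ℂ) :
    Mean (fun t => c • F t) = c • Mean F :=
  Mean_clm hF (c • ContinuousLinearMap.id ℂ E)

lemma norm_avg_le {F : ℝ → E} {C : ℝ} (h : ∀ t, ‖F t‖ ≤ C) {L : ℝ} (hL : 0 < L) :
    ‖avg F L‖ ≤ C := by
  have h1 := intervalIntegral.norm_integral_le_of_norm_le_const (a := -L) (b := L)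
    (fun x _ => h x)
  rw [avg, norm_smul, norm_inv, norm_mul, Complex.norm_real, Complex.norm_ofNat,
    Real.norm_of_nonneg hL.le]
  rw [show |L - -L| = 2 * L by rw [abs_of_pos] <;> linarith] at h1
  rw [inv_mul_le_iff₀ (by positivity)]
  linarith

lemma norm_Mean_le [CompleteSpace E] {F : ℝ → E} (hF : Good F) {C : ℝ} (h : ∀ t, ‖F t‖ ≤ C) :
    ‖Mean F‖ ≤ C :=
  le_of_tendsto hF.tendsto.norm (U_pos.mono fun _ hL => norm_avg_le h hL)

lemma Mean_neg_arg (F : ℝ → E) : Mean (fun t => F (-t)) = Mean F := by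
  have : avg (fun t => F (-t)) = avg F := by
    funext L
    simp only [avg]
    rw [intervalIntegral.integral_comp_neg]; simp
  rw [Mean, this, Mean]

lemma Good.comp_neg {F : ℝ → E} (hF : Good F) : Good (fun t => F (-t)) :=
  ⟨hF.1.comp continuous_neg, hF.2.subset (by rintro _ ⟨t, rfl⟩; exact ⟨-t, rfl⟩)⟩

lemma Good.comp_add {F : ℝ → E} (hF : Good F) (s : ℝ) : Good (fun t => F (t + s)) :=
  ⟨hF.1.comp (by fun_prop), hF.2.subset (by rintro _ ⟨t, rfl⟩; exact ⟨t + s, rfl⟩)⟩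

/-- Translation invariance of the mean: the integrals over `[-L, L]` and `[-L + s, L + s]` differ
by a bounded amount. -/
lemma Mean_add_arg [CompleteSpace E] {F : ℝ → E} (hF : Good F) (s : ℝ) :
    Mean (fun t => F (t + s)) = Mean F := by
  apply Mean_eq
  obtain ⟨C, hC⟩ := hF.bounded
  have hi : ∀ a b, IntervalIntegrable F volume a b := fun a b => hF.1.intervalIntegrable a b
  have h1 : Tendsto (fun L => avg (fun t => F (t + s)) L - avg F L) U (𝓝 0) := by
    rw [tendsto_zero_iff_norm_tendsto_zero]
    have h2 : Tendsto (fun L : ℝ => (2 * C * |s|) * (2 * L)⁻¹) U (𝓝 0) := by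
      have h3 : Tendsto (fun L : ℝ => (2 * L)⁻¹) U (𝓝 0) :=
        (tendsto_inv_atTop_zero.comp (tendsto_id.const_mul_atTop two_pos)).mono_left U_le
      simpa using h3.const_mul (2 * C * |s|)
    refine squeeze_zero' (Eventually.of_forall fun _ => norm_nonneg _) (U_pos.mono fun L hL => ?_) h2
    have h4 : (∫ x in (-L)..L, F (x + s)) - ∫ x in (-L)..L, F x
        = (∫ x in L..(L + s), F x) - ∫ x in (-L)..(-L + s), F x := by
      rw [intervalIntegral.integral_comp_add_right,
        ← intervalIntegral.integral_add_adjacent_intervals (hi (-L + s) L) (hi L (L + s)),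
        ← intervalIntegral.integral_add_adjacent_intervals (hi (-L) (-L + s)) (hi (-L + s) L)]
      abel
    rw [avg, avg, ← smul_sub, h4, norm_smul, norm_inv, norm_mul, Complex.norm_real,
      Complex.norm_ofNat, Real.norm_of_nonneg hL.le, mul_comm]
    gcongr
    refine (norm_sub_le _ _).trans ?_
    have h5 := intervalIntegral.norm_integral_le_of_norm_le_const (a := L) (b := L + s)
      (fun x _ => hC x)
    have h6 := intervalIntegral.norm_integral_le_of_norm_le_const (a := -L) (b := -L + s)
      (fun x _ => hC x)
    rw [show L + s - L = s by ring] at h5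
    rw [show -L + s - -L = s by ring] at h6
    linarith
  simpa using h1.add hF.tendsto

lemma Mean_const [CompleteSpace E] (c : E) : Mean (fun _ : ℝ => c) = c := by
  apply Mean_eq
  refine tendsto_const_nhds.congr' (U_pos.mono fun L hL => ?_)
  rw [avg, intervalIntegral.integral_const, ← Complex.coe_smul, smul_smul]
  have : (L : ℂ) ≠ 0 := by exact_mod_cast hL.ne'
  push_cast
  rw [show (2 * (L : ℂ))⁻¹ * ((L : ℂ) - -L) = 1 by field_simp; ring, one_smul]

lemma re_Mean_nonneg {F : ℝ → ℂ} (hF : Good F) (h : ∀ t, ∃ r : ℝ, 0 ≤ r ∧ F t = r) :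
    0 ≤ (Mean F).re := by
  refine ge_of_tendsto ((Complex.continuous_re.tendsto _).comp hF.tendsto)
    (U_pos.mono fun L hL => ?_)
  choose r hr hFr using h
  have : F = fun t => (r t : ℂ) := funext hFr
  have h1 : avg F L = (((2 * L)⁻¹ * ∫ x in (-L)..L, r x : ℝ) : ℂ) := by
    rw [avg, this, intervalIntegral.integral_ofReal]; push_cast; rfl
  simp only [Function.comp]
  rw [h1, Complex.ofReal_re]
  have := intervalIntegral.integral_nonneg (μ := volume) (by linarith : -L ≤ L) fun x _ => hr x
  positivity

lemma Mean_star {F : ℝ → ℂ} (hF : Good F) :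
    Mean (fun t => (starRingEnd ℂ) (F t)) = (starRingEnd ℂ) (Mean F) := by
  apply Mean_eq
  refine ((Complex.continuous_conj.tendsto _).comp hF.tendsto).congr fun L => ?_
  simp only [Function.comp, avg, smul_eq_mul, map_mul, map_inv₀, Complex.conj_ofReal,
    Complex.conj_ofNat]
  congr 1
  simp only [intervalIntegral, map_sub, integral_conj]

end Mean

/-! ### Growth of powers, characters of `ℝ` and of Banach algebras -/

/-- A sequence with `B (n + 1) ^ 2 ≤ C * B (2 * n + 1)` and `B 3 > 0` does not decay faster than
all geometric sequences: with `ρ = B 3 / C`, its value at `2 ^ (k + 1) + 1` is at least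
`C * ρ ^ (2 ^ k)`. -/
lemma no_superexp (B : ℕ → ℝ) {C K : ℝ} (hC : 0 < C)
    (h : ∀ n, B (n + 1) ^ 2 ≤ C * B (2 * n + 1)) (h3 : 0 < B 3) :
    ¬ ∀ ε : ℝ, 0 < ε → ∀ᶠ n in atTop, B n ≤ K * ε ^ n := by
  intro H
  set ρ := B 3 / C with hρ
  have hρ0 : 0 < ρ := div_pos h3 hC
  have hlow : ∀ k : ℕ, C * ρ ^ (2 ^ k) ≤ B (2 ^ (k + 1) + 1) := by
    intro k
    induction k with
    | zero => simp [hρ]; field_simp; exact le_rfl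
    | succ k ih =>
      have h1 := h (2 ^ (k + 1))
      rw [show 2 * 2 ^ (k + 1) + 1 = 2 ^ (k + 1 + 1) + 1 by ring] at h1
      have h2 : (C * ρ ^ (2 ^ k)) ^ 2 ≤ B (2 ^ (k + 1) + 1) ^ 2 := by gcongr
      have h4 : C * (C * ρ ^ (2 ^ (k + 1))) ≤ C * B (2 ^ (k + 1 + 1) + 1) := by
        refine le_trans (le_of_eq ?_) (h2.trans h1)
        rw [pow_succ 2 k, pow_mul]; ring
      exact le_of_mul_le_mul_left h4 hC
  clear_value ρ
  -- with this `ε` the geometric bound loses a factor `2 ^ (2 ^ k)` against the lower bound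
  set ε := Real.sqrt (ρ / 2) with hε
  have hε0 : 0 < ε := Real.sqrt_pos.2 (by positivity)
  have hε2 : ε ^ 2 = ρ / 2 := Real.sq_sqrt (by positivity)
  have htend : Tendsto (fun k : ℕ => 2 ^ (k + 1) + 1) atTop atTop :=
    tendsto_atTop_mono (fun k => (Nat.lt_two_pow_self (n := k)).le.trans
      ((Nat.pow_le_pow_right two_pos (Nat.le_succ k)).trans (Nat.le_succ _))) tendsto_id
  have hup := htend.eventually (H ε hε0)
  have hbound : ∀ᶠ k : ℕ in atTop, (k : ℝ) ≤ K * ε / C := by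
    filter_upwards [hup] with k hk
    have h5 := (hlow k).trans hk
    have h6 : ε ^ (2 ^ (k + 1) + 1) = ε * (ρ / 2) ^ (2 ^ k) := by
      rw [pow_succ, pow_succ 2 k, mul_comm (2 ^ k) 2, pow_mul, hε2]; ring
    rw [h6, div_pow] at h5
    have h7 : 0 < ρ ^ (2 ^ k) := by positivity
    have h8 : C * (2 : ℝ) ^ (2 ^ k) ≤ K * ε := by
      have h9 : (C * 2 ^ (2 ^ k)) * ρ ^ (2 ^ k) ≤ (K * ε) * ρ ^ (2 ^ k) := by
        have h10 : (0 : ℝ) < 2 ^ (2 ^ k) := by positivity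
        have := mul_le_mul_of_nonneg_right h5 h10.le
        calc _ = C * ρ ^ 2 ^ k * 2 ^ 2 ^ k := by ring
          _ ≤ _ := this
          _ = (K * ε) * ρ ^ 2 ^ k := by field_simp
      exact le_of_mul_le_mul_right h9 h7
    rw [le_div_iff₀ hC]
    have h11 : (k : ℝ) ≤ (2 : ℝ) ^ (2 ^ k) := by
      have : k < 2 ^ (2 ^ k) := (Nat.lt_two_pow_self).trans (Nat.lt_two_pow_self)
      exact_mod_cast this.le
    nlinarith
  obtain ⟨k, hk1, hk2⟩ := (hbound.and
    (tendsto_natCast_atTop_atTop.eventually_gt_atTop (K * ε / C))).exists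
  linarith

/-- Bounded continuous characters of `ℝ` are exponentials: integrating the functional equation
shows that such a function is differentiable and solves `u' = c u`, and boundedness makes `c`
imaginary. -/
lemma exists_exp_of_hom (u : ℝ → ℂ) (hu : Continuous u) (h0 : u 0 = 1)
    (hadd : ∀ s t, u (s + t) = u s * u t) {K : ℝ} (hK : ∀ t, ‖u t‖ ≤ K) :
    ∃ ω : ℝ, ∀ t : ℝ, u t = Complex.exp (((2 * Real.pi * ω * t : ℝ) : ℂ) * Complex.I) := by
  have hi : ∀ a b, IntervalIntegrable u volume a b := fun a b => hu.intervalIntegrable a b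
  have hprim : ∀ t, HasDerivAt (fun t => ∫ x in (0:ℝ)..t, u x) (u t) t := fun t =>
    intervalIntegral.integral_hasDerivAt_right (hi _ _)
      hu.stronglyMeasurable.stronglyMeasurableAtFilter hu.continuousAt
  obtain ⟨δ, hδ⟩ : ∃ δ : ℝ, ∫ x in (0:ℝ)..δ, u x ≠ 0 := by
    by_contra! hcon
    have h1 := hprim 0
    have h2 : (fun t => ∫ x in (0:ℝ)..t, u x) = fun _ => 0 := funext hcon
    rw [h2] at h1
    have := h1.unique (hasDerivAt_const (0:ℝ) (0:ℂ))
    rw [h0] at this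
    exact one_ne_zero this
  set D := ∫ x in (0:ℝ)..δ, u x with hD
  have hrep : ∀ t, u t = ((∫ x in (0:ℝ)..(t + δ), u x) - ∫ x in (0:ℝ)..t, u x) / D := by
    intro t
    rw [eq_div_iff hδ, intervalIntegral.integral_interval_sub_left (hi _ _) (hi _ _), hD,
      ← intervalIntegral.integral_const_mul]
    simp_rw [← hadd]
    rw [intervalIntegral.integral_comp_add_left]; simp
  set c := (u δ - 1) / D with hc
  have hder : ∀ t, HasDerivAt u (c * u t) t := by
    intro t
    have h1 := (((hprim (t + δ)).comp_add_const t δ).sub (hprim t)).div_const D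
    have h3 : c * u t = (u (t + δ) - u t) / D := by rw [hadd, hc]; ring
    rw [h3]
    exact h1.congr_of_eventuallyEq (Eventually.of_forall hrep)
  have hexp : ∀ t : ℝ, u t = Complex.exp (c * t) := by
    have hcd : ∀ t : ℝ, HasDerivAt (fun t : ℝ => u t * Complex.exp (-(c * t))) 0 t := by
      intro t
      have h1 : HasDerivAt (fun t : ℝ => Complex.exp (-(c * t)))
          (Complex.exp (-(c * t)) * -(c * 1)) t := by
        have h2 : HasDerivAt (fun t : ℝ => (t : ℂ)) 1 t := Complex.ofRealCLM.hasDerivAt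
        exact ((h2.const_mul c).neg).cexp
      convert! (hder t).mul h1 using 1
      ring
    intro t
    have h1 := is_const_of_deriv_eq_zero (fun t => (hcd t).differentiableAt)
      (fun t => (hcd t).deriv) t 0
    simp only [h0, Complex.ofReal_zero, mul_zero, neg_zero, Complex.exp_zero, mul_one,
      Complex.exp_neg] at h1
    rwa [mul_inv_eq_one₀ (Complex.exp_ne_zero _)] at h1
  have hre : c.re = 0 := by
    by_contra hne
    have h1 : ∀ r : ℝ, Real.exp r ≤ K := by
      intro r
      have h2 := hK (r / c.re)
      rw [hexp, Complex.norm_exp, Complex.re_mul_ofReal, mul_div_cancel₀ r hne] at h2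
      exact h2
    have h2 := Real.add_one_le_exp K
    have := h1 K
    linarith
  refine ⟨c.im / (2 * Real.pi), fun t => ?_⟩
  rw [hexp]
  congr 1
  have h1 : 2 * Real.pi * (c.im / (2 * Real.pi)) * t = c.im * t := by
    field_simp
  rw [h1]
  apply Complex.ext <;> simp [hre]

/-- In a commutative complex Banach algebra, an element all of whose characters vanish is
quasinilpotent. -/
lemma exists_character_ne_zero {A : Type*} [NormedCommRing A] [NormedAlgebra ℂ A] [CompleteSpace A]
    (T : A) (hT : ¬ ∀ ε : ℝ, 0 < ε → ∀ᶠ n : ℕ in atTop, ‖T ^ n‖ ≤ ε ^ n) :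
    ∃ χ : WeakDual.characterSpace ℂ A, χ T ≠ 0 := by
  by_contra! hcon
  apply hT
  intro ε hε
  rcases subsingleton_or_nontrivial A with hA | hA
  · refine Eventually.of_forall fun n => ?_
    rw [Subsingleton.elim (T ^ n) 0, norm_zero]; positivity
  obtain ⟨z, hz, hzr⟩ := spectrum.exists_nnnorm_eq_spectralRadius T
  obtain ⟨χ, rfl⟩ := WeakDual.CharacterSpace.mem_spectrum_iff_exists.1 hz
  rw [hcon χ] at hzr
  have hlim := spectrum.pow_norm_pow_one_div_tendsto_nhds_spectralRadius T
  rw [← hzr] at hlim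
  simp only [nnnorm_zero, ENNReal.coe_zero] at hlim
  filter_upwards [hlim.eventually (gt_mem_nhds (ENNReal.ofReal_pos.2 hε)), eventually_gt_atTop 0]
    with n hn hn0
  rw [ENNReal.ofReal_lt_ofReal_iff hε] at hn
  calc ‖T ^ n‖ = (‖T ^ n‖ ^ (1 / n : ℝ)) ^ n := by
        rw [← Real.rpow_natCast, ← Real.rpow_mul (norm_nonneg _)]
        rw [one_div_mul_cancel (by positivity), Real.rpow_one]
    _ ≤ ε ^ n := by gcongr

/-- If `T` is not quasinilpotent and `T²` is the mean of `h(t) τ_t T`, then `h` has a nonzero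
Fourier coefficient: a character `χ` with `χ(T) ≠ 0` restricts to an exponential `χ(τ_t)`, and
`χ(T)` is the mean of `h(t) χ(τ_t)`. -/
lemma exists_mean_ne_zero {A : Type*} [NormedCommRing A] [NormedAlgebra ℂ A] [CompleteSpace A]
    (T : A) (τ : ℝ → A) (h : ℝ → ℂ) (hh : Good h) (τ0 : τ 0 = 1)
    (τadd : ∀ s t, τ (s + t) = τ s * τ t) (τn : ∀ t, ‖τ t‖ ≤ 1) (hG : Good (fun t => τ t * T))
    (hTT : T * T = Mean (fun t => h t • (τ t * T)))
    (hT : ¬ ∀ ε : ℝ, 0 < ε → ∀ᶠ n : ℕ in atTop, ‖T ^ n‖ ≤ ε ^ n) :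
    ∃ ω : ℝ, Mean (fun t => h t *
      Complex.exp (((2 * Real.pi * ω * t : ℝ) : ℂ) * Complex.I)) ≠ 0 := by
  obtain ⟨χ, hχ⟩ := exists_character_ne_zero T hT
  let Λ : A →L[ℂ] ℂ := WeakDual.CharacterSpace.toCLM χ
  have hΛ : ∀ a, Λ a = χ a := fun a => rfl
  have hcont : Continuous fun t => χ (τ t) := by
    have h1 : Continuous fun t => Λ (τ t * T) := Λ.continuous.comp hG.1
    have h2 : (fun t => χ (τ t)) = fun t => Λ (τ t * T) / χ T := by
      funext t; rw [hΛ, map_mul, mul_div_cancel_right₀ _ hχ]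
    rw [h2]; exact h1.div_const _
  obtain ⟨ω, hω⟩ := exists_exp_of_hom (fun t => χ (τ t)) hcont (by simp [τ0])
    (fun s t => by simp [τadd]) (K := ‖Λ‖) (fun t => by
      have := Λ.le_opNorm (τ t)
      exact this.trans (mul_le_of_le_one_right (norm_nonneg _) (τn t)))
  refine ⟨ω, fun hzero => hχ ?_⟩
  have h1 : χ T * χ T = 0 := by
    rw [← map_mul, hTT, ← hΛ, ← Mean_clm (hh.smul hG)]
    have h2 : (fun t => Λ (h t • (τ t * T))) = fun t => χ T • (h t *
        Complex.exp (((2 * Real.pi * ω * t : ℝ) : ℂ) * Complex.I)) := by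
      funext t
      rw [map_smul, hΛ, map_mul, ← hω t]; simp only [smul_eq_mul]; ring
    rw [h2, Mean_const_smul, hzero, smul_zero]
    have h3 := hh.smul (hG.clm Λ)
    refine h3.dom (‖χ T‖⁻¹) fun s t => ?_
    simp only [hΛ, map_mul, hω, smul_eq_mul]
    rw [← mul_assoc, ← mul_assoc, ← sub_mul, norm_mul, mul_comm ‖_‖ ‖χ T‖,
      inv_mul_cancel_left₀ (norm_ne_zero_iff.2 hχ)]
  exact mul_self_eq_zero.1 h1

/-! ### Translations and the mean inner product -/

open BoundedContinuousFunction in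
/-- The Banach space of bounded continuous functions on `ℝ`. -/
abbrev X : Type := ℝ →ᵇ ℂ

/-- Translation by `s`, that is `(tr s φ)(x) = φ (x - s)`. -/
def tr (s : ℝ) : X →L[ℂ] X :=
  BoundedContinuousFunction.compContinuousCLM ℂ ℂ ⟨fun x => x - s, by fun_prop⟩

@[simp] lemma tr_apply (s : ℝ) (φ : X) (x : ℝ) : tr s φ x = φ (x - s) := rfl

lemma tr_add (s t : ℝ) : tr (s + t) = tr s * tr t := by
  ext φ x
  simp only [tr_apply, mul_apply_eq_comp]
  congr 1; ring

lemma tr_zero : tr 0 = 1 := by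
  ext φ x
  simp

lemma norm_tr_le (s : ℝ) : ‖tr s‖ ≤ 1 :=
  BoundedContinuousFunction.norm_compContinuousCLM_le_one _

lemma norm_tr_apply_le (s : ℝ) (φ : X) : ‖tr s φ‖ ≤ ‖φ‖ :=
  ((tr s).le_of_opNorm_le (norm_tr_le s) φ).trans (by simp)

lemma good_coe (φ : X) : Good φ := good_of_bounded φ.continuous φ.norm_coe_le_norm

/-- `φ` is almost periodic in Bochner's sense: its translates depend continuously on the
translation and form a totally bounded set. -/
def AP (φ : X) : Prop := Good (fun t => tr t φ)

lemma norm_mul_apply_le (a b : X) (t : ℝ) : ‖a t * b t‖ ≤ ‖b‖ * ‖a‖ := by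
  rw [norm_mul, mul_comm]
  gcongr
  · exact b.norm_coe_le_norm t
  · exact a.norm_coe_le_norm t

lemma good_mul (a b : X) : Good (fun t => a t * b t) := good_coe (a * b)

/-- The functional `φ ↦ Mean (φ e)`. -/
def meanMul (e : X) : X →L[ℂ] ℂ :=
  LinearMap.mkContinuous
    { toFun := fun φ => Mean (fun t => φ t * e t)
      map_add' := fun φ ψ => by
        rw [← Mean_add (good_mul φ e) (good_mul ψ e)]
        simp [add_mul]
      map_smul' := fun c φ => by
        rw [RingHom.id_apply, ← Mean_const_smul (good_mul φ e)]
        simp [mul_assoc] }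
    ‖e‖ (fun φ => norm_Mean_le (good_mul φ e) fun t => norm_mul_apply_le φ e t)

lemma meanMul_apply (e φ : X) : meanMul e φ = Mean (fun t => φ t * e t) := rfl

/-- The semi-inner product `⟨ψ, φ⟩ = Mean (φ ψ̄)`, as a functional of `φ`. -/
def ip (ψ : X) : X →L[ℂ] ℂ := meanMul (star ψ)

lemma ip_apply (ψ φ : X) : ip ψ φ = Mean (fun t => φ t * (starRingEnd ℂ) (ψ t)) := rfl

lemma ip_conj (ψ φ : X) : (starRingEnd ℂ) (ip ψ φ) = ip φ ψ := by
  have h : Good (fun t => φ t * (starRingEnd ℂ) (ψ t)) := good_mul φ (star ψ)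
  rw [ip_apply, ip_apply, ← Mean_star h]
  congr 1; funext t; simp [mul_comm]

lemma ip_self_nonneg (φ : X) : 0 ≤ (ip φ φ).re :=
  re_Mean_nonneg (good_mul φ (star φ)) fun t =>
    ⟨Complex.normSq (φ t), Complex.normSq_nonneg _, by
      rw [← Complex.mul_conj]; rfl⟩

lemma norm_ip_self (φ : X) : ‖ip φ φ‖ = (ip φ φ).re := by
  have h1 : (ip φ φ).im = 0 := by
    have := congrArg Complex.im (ip_conj φ φ)
    simp at this; linarith
  have h2 : ip φ φ = ((ip φ φ).re : ℂ) := Complex.ext rfl (by simp [h1])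
  rw [h2, Complex.norm_real, Complex.ofReal_re, Real.norm_of_nonneg (ip_self_nonneg φ)]

lemma cauchy_schwarz (φ ψ : X) : ‖ip φ ψ‖ ^ 2 ≤ (ip φ φ).re * (ip ψ ψ).re := by
  let c : PreInnerProductSpace.Core ℂ X :=
    { inner := fun φ ψ => ip φ ψ
      conj_inner_symm := fun x y => ip_conj y x
      re_inner_nonneg := fun x => ip_self_nonneg x
      add_left := fun x y z => by
        rw [← ip_conj, map_add, map_add, ip_conj, ip_conj]
      smul_left := fun x y r => by
        rw [← ip_conj, map_smul, smul_eq_mul, map_mul, ip_conj] }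
  have h := InnerProductSpace.Core.inner_mul_inner_self_le (𝕜 := ℂ) (F := X) φ ψ
  have h1 : ‖ip φ ψ‖ * ‖ip ψ φ‖ ≤ (ip φ φ).re * (ip ψ ψ).re := h
  rwa [← ip_conj φ ψ, RCLike.norm_conj, ← sq] at h1

lemma ip_tr (s : ℝ) (φ : X) : ip (tr s φ) (tr s φ) = ip φ φ := by
  have h : Good (fun t => φ t * (starRingEnd ℂ) (φ t)) := good_mul φ (star φ)
  rw [ip_apply, ip_apply, ← Mean_add_arg h (-s)]
  rfl

/-- A nonzero almost periodic function has positive mean square: finitely many translates of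
`|φ|²` have a sum bounded below by a positive constant. -/
lemma ip_self_pos {φ : X} (hφ : AP φ) (h0 : φ ≠ 0) : 0 < (ip φ φ).re := by
  obtain ⟨x₀, hx₀⟩ : ∃ x, φ x ≠ 0 := by
    by_contra! h; exact h0 (by ext x; simp [h x])
  have hδ : 0 < ‖φ x₀‖ / 2 := by positivity
  obtain ⟨S, hS⟩ := hφ.net hδ
  set c := (‖φ x₀‖ / 2) ^ 2 with hc
  -- the correlation `t ↦ |φ (x₀ + s - t)|²`, whose mean is `⟨φ, φ⟩` for every `s`
  let g : ℝ → ℝ → ℂ := fun s t => φ (x₀ + s - t) * (starRingEnd ℂ) (φ (x₀ + s - t))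
  have hF : Good (fun t => φ t * (starRingEnd ℂ) (φ t)) := good_mul φ (star φ)
  have hg : ∀ s, Good (g s) := fun s => by
    have := (hF.comp_add (x₀ + s)).comp_neg
    refine ⟨?_, this.2.subset ?_⟩
    · have := this.1; simpa only [g, sub_eq_neg_add] using this
    · rintro _ ⟨t, rfl⟩; exact ⟨t, by simp only [g, sub_eq_neg_add]⟩
  have hgm : ∀ s, Mean (g s) = ip φ φ := fun s => by
    rw [ip_apply, ← Mean_add_arg hF (x₀ + s),
      ← Mean_neg_arg (fun t => φ (t + (x₀ + s)) * (starRingEnd ℂ) (φ (t + (x₀ + s))))]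
    simp only [g, sub_eq_neg_add]
  have hgn : ∀ s t, g s t = ((‖φ (x₀ + s - t)‖ ^ 2 : ℝ) : ℂ) := fun s t => by
    simp only [g]; rw [Complex.mul_conj, Complex.normSq_eq_norm_sq]
  have hsum : ∀ S : Finset ℝ, Good (fun t => ∑ s ∈ S, g s t) ∧
      Mean (fun t => ∑ s ∈ S, g s t) = S.card * ip φ φ := by
    intro S
    classical
    induction S using Finset.induction_on with
    | empty => simp only [Finset.sum_empty]; exact ⟨good_of_bounded continuous_const (C := 0)
        (by simp), by rw [Mean_const]; simp⟩
    | insert a S ha ih =>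
      simp only [Finset.sum_insert ha]
      refine ⟨(hg a).add ih.1, ?_⟩
      rw [Mean_add (hg a) ih.1, hgm, ih.2, Finset.card_insert_of_notMem ha]
      push_cast; ring
  obtain ⟨h1, h2⟩ := hsum S
  have h3 : 0 ≤ (Mean (fun t => (∑ s ∈ S, g s t) + (-c : ℂ))).re := by
    refine re_Mean_nonneg (h1.add (good_of_bounded continuous_const (C := ‖(-c : ℂ)‖)
      fun _ => le_rfl)) fun t => ?_
    refine ⟨∑ s ∈ S, ‖φ (x₀ + s - t)‖ ^ 2 - c, ?_, by simp [hgn, sub_eq_add_neg]⟩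
    obtain ⟨s, hs, hst⟩ := hS t
    have h4 : ‖φ (x₀ + s - t) - φ x₀‖ < ‖φ x₀‖ / 2 := by
      have := (tr t φ - tr s φ).norm_coe_le_norm (x₀ + s)
      simp only [BoundedContinuousFunction.sub_apply, tr_apply, add_sub_cancel_right] at this
      exact this.trans_lt hst
    have h5 : ‖φ x₀‖ / 2 ≤ ‖φ (x₀ + s - t)‖ := by
      have := norm_sub_norm_le (φ x₀) (φ (x₀ + s - t))
      rw [norm_sub_rev] at this; linarith
    have h6 : c ≤ ‖φ (x₀ + s - t)‖ ^ 2 := by rw [hc]; gcongr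
    have h7 := Finset.single_le_sum (f := fun s => ‖φ (x₀ + s - t)‖ ^ 2)
      (fun i _ => by positivity) hs
    linarith
  rw [Mean_add h1 (good_of_bounded continuous_const (C := ‖(-c : ℂ)‖) fun _ => le_rfl),
    Mean_const, h2] at h3
  simp only [Complex.add_re, Complex.neg_re, ← Complex.ofReal_natCast, Complex.re_ofReal_mul,
    Complex.ofReal_re] at h3
  have hc0 : 0 < c := by positivity
  by_contra hneg
  have : (ip φ φ).re = 0 := le_antisymm (not_lt.1 hneg) (ip_self_nonneg φ)
  rw [this] at h3
  simp at h3
  linarith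

/-! ### Convolution by an almost periodic function -/

/-- Convolution by `h`, that is `(conv h φ)(x) = Mean_t (φ t * h (x - t))`, built as a mean of
translates of `h` in the Banach space `X`. -/
def conv (h : X) (hh : AP h) : X →L[ℂ] X :=
  LinearMap.mkContinuous
    { toFun := fun φ => Mean (fun t => φ t • tr t h)
      map_add' := fun φ ψ => by
        rw [← Mean_add ((good_coe φ).smul hh) ((good_coe ψ).smul hh)]
        simp [add_smul]
      map_smul' := fun c φ => by
        rw [RingHom.id_apply, ← Mean_const_smul ((good_coe φ).smul hh)]
        simp [mul_smul] }
    ‖h‖ (fun φ => norm_Mean_le ((good_coe φ).smul hh) fun t => by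
      rw [norm_smul, mul_comm]
      gcongr
      · exact norm_tr_apply_le t h
      · exact φ.norm_coe_le_norm t)

section Conv

variable {h : X} (hh : AP h)

lemma conv_def (φ : X) : conv h hh φ = Mean (fun t => φ t • tr t h) := rfl

lemma conv_apply (φ : X) (x : ℝ) : conv h hh φ x = Mean (fun t => φ t * h (x - t)) := by
  have := Mean_clm ((good_coe φ).smul hh) (BoundedContinuousFunction.evalCLM ℂ x)
  rw [conv_def]
  exact this.symm

lemma tr_conv (s : ℝ) (φ : X) : tr s (conv h hh φ) = conv h hh (tr s φ) := by
  rw [conv_def, conv_def, ← Mean_clm ((good_coe φ).smul hh) (tr s),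
    ← Mean_add_arg ((good_coe (tr s φ)).smul hh) s]
  congr 1; funext t
  rw [map_smul, tr_apply, add_sub_cancel_right, add_comm t s, tr_add]
  rfl

lemma norm_tr_conv_sub_le (s t : ℝ) :
    ‖tr s * conv h hh - tr t * conv h hh‖ ≤ 1 * ‖tr s h - tr t h‖ := by
  rw [one_mul]
  refine ContinuousLinearMap.opNorm_le_bound _ (norm_nonneg _) fun φ => ?_
  have hg : Good (fun r => φ r • (tr s - tr t) (tr r h)) := (good_coe φ).smul (hh.clm _)
  have h1 : (tr s * conv h hh - tr t * conv h hh) φ =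
      Mean (fun r => φ r • (tr s - tr t) (tr r h)) := by
    have := Mean_clm ((good_coe φ).smul hh) (tr s - tr t)
    simp only [map_smul] at this
    rw [this]; rfl
  rw [h1]
  refine norm_Mean_le hg fun r => ?_
  rw [norm_smul, mul_comm]
  gcongr
  · have : (tr s - tr t) (tr r h) = tr r (tr s h - tr t h) := by
      rw [map_sub, sub_apply]
      simp only [← mul_apply_eq_comp, ← tr_add, add_comm]
    rw [this]; exact norm_tr_apply_le _ _
  · exact φ.norm_coe_le_norm r

lemma good_tr_conv : Good (fun t => tr t * conv h hh) := hh.dom 1 (norm_tr_conv_sub_le hh)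

/-- The square of convolution by `h` is the mean of `h(t) τ_t ∘ conv h` in operator norm. -/
lemma conv_sq : conv h hh * conv h hh = Mean (fun t => h t • (tr t * conv h hh)) := by
  ext φ x
  let Λ : (X →L[ℂ] X) →L[ℂ] ℂ :=
    (BoundedContinuousFunction.evalCLM ℂ x).comp (ContinuousLinearMap.apply ℂ X φ)
  have h1 := Mean_clm ((good_coe h).smul (good_tr_conv hh)) Λ
  have h2 : Λ (Mean (fun t => h t • (tr t * conv h hh))) =
      (Mean (fun t => h t • (tr t * conv h hh))) φ x := rfl
  rw [← h2, ← h1, mul_apply_eq_comp, conv_apply]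
  have h3 : (fun t => Λ (h t • (tr t * conv h hh))) = fun t => h t * conv h hh φ (x - t) := rfl
  have hg : Good (fun t => h t * conv h hh φ (x - t)) := by
    rw [← h3]; exact ((good_coe h).smul (good_tr_conv hh)).clm Λ
  rw [h3, ← Mean_add_arg hg x,
    ← Mean_neg_arg (fun t => h (t + x) * conv h hh φ (x - (t + x)))]
  congr 1; funext t
  rw [neg_add_eq_sub, sub_sub_cancel, mul_comm]

variable (hsa : ∀ x, h (-x) = (starRingEnd ℂ) (h x))

include hsa in
lemma conv_eq_ip (φ : X) (x : ℝ) : conv h hh φ x = ip (tr x h) φ := by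
  rw [conv_apply, ip_apply]
  congr 1; funext t
  rw [tr_apply, ← hsa, neg_sub]

include hsa in
/-- `conv h` is symmetric when `h(-x)` is the conjugate of `h x`. -/
lemma ip_conv (φ ψ : X) : ip (conv h hh ψ) φ = ip ψ (conv h hh φ) := by
  rw [conv_def hh φ, ← Mean_clm ((good_coe φ).smul hh) (ip ψ), ip_apply]
  congr 1; funext t
  rw [map_smul, conv_eq_ip hh hsa, ip_conj, smul_eq_mul]

include hsa in
lemma ip_conv_pow (n : ℕ) (φ ψ : X) :
    ip ((conv h hh ^ n) ψ) φ = ip ψ ((conv h hh ^ n) φ) := by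
  induction n generalizing φ ψ with
  | zero => rfl
  | succ n ih =>
    conv_lhs => rw [pow_succ, mul_apply_eq_comp]
    conv_rhs => rw [pow_succ', mul_apply_eq_comp]
    rw [ih, ip_conv hh hsa]

include hsa in
lemma ip_pow_self (n : ℕ) : ip ((conv h hh ^ n) h) ((conv h hh ^ n) h) =
    (conv h hh ^ (2 * n + 1)) h 0 := by
  rw [ip_conv_pow hh hsa, ← mul_apply_eq_comp, ← pow_add, ← two_mul, pow_succ',
    mul_apply_eq_comp, conv_eq_ip hh hsa, tr_zero]
  rfl

include hsa in
/-- Convolution by a nonzero self-adjoint almost periodic function is not quasinilpotent: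
Cauchy-Schwarz bounds `‖T ^ (n + 1) h‖ ^ 2` by `⟨h, h⟩ * ‖T ^ (2 * n + 1) h‖`, where `T = conv h`,
which excludes superexponential decay. -/
lemma conv_not_quasinilpotent (h0 : h ≠ 0) :
    ¬ ∀ ε : ℝ, 0 < ε → ∀ᶠ n : ℕ in atTop, ‖conv h hh ^ n‖ ≤ ε ^ n := by
  intro H
  refine no_superexp (fun n => ‖(conv h hh ^ n) h‖) (C := (ip h h).re) (K := ‖h‖)
    (ip_self_pos hh h0) (fun n => ?_) ?_ ?_
  · have h1 : ∀ x, ‖(conv h hh ^ (n + 1)) h x‖ ^ 2 ≤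
        (ip h h).re * ‖(conv h hh ^ (2 * n + 1)) h‖ := by
      intro x
      rw [pow_succ' (conv h hh) n, mul_apply_eq_comp, conv_eq_ip hh hsa]
      refine (cauchy_schwarz _ _).trans ?_
      rw [ip_tr, ← norm_ip_self ((conv h hh ^ n) h), ip_pow_self hh hsa]
      gcongr
      · exact ip_self_nonneg h
      · exact BoundedContinuousFunction.norm_coe_le_norm _ _
    have h2 : 0 ≤ (ip h h).re * ‖(conv h hh ^ (2 * n + 1)) h‖ :=
      mul_nonneg (ip_self_nonneg h) (norm_nonneg _)
    have h3 : ‖(conv h hh ^ (n + 1)) h‖ ≤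
        √((ip h h).re * ‖(conv h hh ^ (2 * n + 1)) h‖) :=
      (BoundedContinuousFunction.norm_le (Real.sqrt_nonneg _)).2
        fun x => Real.le_sqrt_of_sq_le (h1 x)
    calc _ ≤ √((ip h h).re * ‖(conv h hh ^ (2 * n + 1)) h‖) ^ 2 := by gcongr
      _ = _ := Real.sq_sqrt h2
  · -- two applications of the positivity of the mean square, to `h` and to `conv h h`
    have hv : (conv h hh ^ 1) h ≠ 0 := by
      intro hz
      have h1 := ip_pow_self hh hsa 0
      rw [mul_zero, zero_add, hz] at h1
      have h2 := ip_self_pos hh h0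
      simp only [pow_zero, one_apply_eq_self] at h1
      rw [h1] at h2
      simp at h2
    have hAP : AP ((conv h hh ^ 1) h) := by
      refine hh.dom ‖conv h hh‖ fun s t => ?_
      rw [pow_one, tr_conv, tr_conv, ← map_sub]
      exact ContinuousLinearMap.le_opNorm _ _
    have h1 := ip_self_pos hAP hv
    rw [ip_pow_self hh hsa] at h1
    rw [norm_pos_iff]
    intro hz
    rw [show 2 * 1 + 1 = 3 from rfl, hz] at h1
    simp at h1
  · intro ε hε
    filter_upwards [H ε hε] with n hn
    calc _ ≤ ‖conv h hh ^ n‖ * ‖h‖ := ContinuousLinearMap.le_opNorm _ _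
      _ ≤ _ := by rw [mul_comm]; gcongr

include hh hsa in
/-- A self-adjoint almost periodic function without Fourier coefficients vanishes. -/
lemma eq_zero_of_selfAdjoint (hF : ∀ ω : ℝ, Mean (fun t => h t *
      Complex.exp (((2 * Real.pi * ω * t : ℝ) : ℂ) * Complex.I)) = 0) : h = 0 := by
  by_contra h0
  -- the double commutant of the convolution operator and the translations is a commutative
  -- Banach algebra
  set S : Set (X →L[ℂ] X) := insert (conv h hh) (Set.range tr) with hS
  have htc : ∀ s, tr s * conv h hh = conv h hh * tr s := fun s => by
    ext1 φ; exact tr_conv hh s φ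
  have hcomm : ∀ a ∈ S, ∀ b ∈ S, a * b = b * a := by
    rintro a (rfl | ⟨s, rfl⟩) b (rfl | ⟨t, rfl⟩)
    · rfl
    · exact (htc t).symm
    · exact htc s
    · rw [← tr_add, ← tr_add, add_comm]
  let A : Subalgebra ℂ (X →L[ℂ] X) :=
    Subalgebra.centralizer ℂ (Set.centralizer S)
  have hSA : S ⊆ A := fun a ha b hb => (hb a ha).symm
  have hAS : ∀ a ∈ A, a ∈ Set.centralizer S := fun a ha b hb =>
    ha b (fun c hc => hcomm c hc b hb)
  have hAclosed : IsClosed (A : Set (X →L[ℂ] X)) := Set.isClosed_centralizer _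
  have : CompleteSpace A := hAclosed.completeSpace_coe
  let instA : NormedCommRing A :=
    { (inferInstance : NormedRing A) with
      mul_comm := fun a b => Subtype.ext (b.2 a.1 (hAS a.1 a.2)) }
  let T : A := ⟨conv h hh, hSA (Set.mem_insert _ _)⟩
  let τ : ℝ → A := fun t => ⟨tr t, hSA (Set.mem_insert_of_mem _ ⟨t, rfl⟩)⟩
  have hG : Good (fun t => τ t * T) := hh.dom 1 (norm_tr_conv_sub_le hh)
  obtain ⟨ω, hω⟩ := exists_mean_ne_zero T τ h (good_coe h) (Subtype.ext tr_zero)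
    (fun s t => Subtype.ext (tr_add s t)) norm_tr_le hG
    (by
      apply Subtype.ext
      let incl : A →L[ℂ] (X →L[ℂ] X) := ⟨A.val.toLinearMap, continuous_subtype_val⟩
      have h1 := Mean_clm (E := A) (E' := X →L[ℂ] X) ((good_coe h).smul hG) incl
      have h2 : ((Mean (fun t => h t • (τ t * T)) : A) : X →L[ℂ] X) =
          Mean (fun t => h t • (tr t * conv h hh)) := h1.symm
      rw [h2, ← conv_sq]; rfl)
    (fun H => conv_not_quasinilpotent hh hsa h0 H)
  exact hω (hF ω)

end Conv

/-! ### Uniqueness of Fourier coefficients -/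

/-- The involution `φ*(x) = conj (φ (-x))`. -/
def refl (φ : X) : X := star (φ.compContinuous ⟨fun x => -x, by fun_prop⟩)

lemma refl_apply (φ : X) (x : ℝ) : refl φ x = (starRingEnd ℂ) (φ (-x)) := rfl

lemma norm_tr_refl_sub_le (φ : X) (s t : ℝ) :
    ‖tr s (refl φ) - tr t (refl φ)‖ ≤ ‖tr s φ - tr t φ‖ := by
  refine (BoundedContinuousFunction.norm_le (norm_nonneg _)).2 fun x => ?_
  have h1 := (tr s φ - tr t φ).norm_coe_le_norm (s + t - x)
  simp only [BoundedContinuousFunction.sub_apply, tr_apply, refl_apply] at h1 ⊢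
  rw [← map_sub, RCLike.norm_conj, norm_sub_rev]
  rwa [show s + t - x - s = -(x - t) by ring, show s + t - x - t = -(x - s) by ring] at h1

/-- The character `x ↦ exp (-2πiωx)`. -/
def ch (ω : ℝ) : X :=
  BoundedContinuousFunction.ofNormedAddCommGroup
    (fun x : ℝ => Complex.exp (((-(2 * Real.pi * ω * x) : ℝ) : ℂ) * Complex.I))
    (by fun_prop) 1 (fun x => (Complex.norm_exp_ofReal_mul_I _).le)

lemma ch_apply (ω x : ℝ) :
    ch ω x = Complex.exp (((-(2 * Real.pi * ω * x) : ℝ) : ℂ) * Complex.I) := rfl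

lemma ch_add (ω x y : ℝ) : ch ω (x + y) = ch ω x * ch ω y := by
  simp only [ch_apply]
  rw [← Complex.exp_add]
  congr 1; push_cast; ring

lemma ch_neg (ω x : ℝ) : ch ω (-x) = (starRingEnd ℂ) (ch ω x) := by
  simp only [ch_apply]
  rw [← Complex.exp_conj, map_mul, Complex.conj_ofReal, Complex.conj_I]
  congr 1; push_cast; ring

/-- The Fourier coefficient at frequency `ω`. -/
def fc (ω : ℝ) : X →L[ℂ] ℂ := meanMul (ch ω)

lemma fc_apply (ω : ℝ) (φ : X) : fc ω φ = Mean (fun t => φ t * ch ω t) := rfl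

lemma fc_tr (ω s : ℝ) (φ : X) : fc ω (tr s φ) = ch ω s * fc ω φ := by
  rw [fc_apply, fc_apply, ← Mean_add_arg (good_mul (tr s φ) (ch ω)) s, ← smul_eq_mul,
    ← Mean_const_smul (good_mul φ (ch ω))]
  congr 1; funext t
  rw [tr_apply, add_sub_cancel_right, ch_add, smul_eq_mul]
  ring

lemma fc_refl (ω : ℝ) (φ : X) : fc ω (refl φ) = (starRingEnd ℂ) (fc ω φ) := by
  rw [fc_apply, fc_apply, ← Mean_star (good_mul φ (ch ω)),
    ← Mean_neg_arg (fun t => (starRingEnd ℂ) (φ t * ch ω t))]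
  congr 1; funext t
  rw [refl_apply, map_mul, ch_neg, Complex.conj_conj]

/-- Uniqueness theorem: an almost periodic function whose Fourier coefficients all vanish is
zero. The self-adjoint and skew-adjoint parts of `h` are treated separately. -/
lemma eq_zero_of_fc {h : X} (hh : AP h) (hF : ∀ ω, fc ω h = 0) : h = 0 := by
  have key : ∀ k : X, AP k → (∀ x, k (-x) = (starRingEnd ℂ) (k x)) → (∀ ω, fc ω k = 0) →
      k = 0 := by
    intro k hk hsa hk0
    refine eq_zero_of_selfAdjoint hk hsa fun ω => ?_
    rw [← hk0 (-ω), fc_apply]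
    congr 1; funext t
    rw [ch_apply]
    congr 4; ring
  have hr : AP (refl h) := hh.dom 1 fun s t => by
    rw [one_mul]; exact norm_tr_refl_sub_le h s t
  have hs : AP (h + refl h) := by
    have := Good.add hh hr
    simpa only [AP, map_add] using this
  have hd : AP (Complex.I • (h - refl h)) := by
    have := (Good.add hh (hr.clm (-ContinuousLinearMap.id ℂ X))).clm
      (Complex.I • ContinuousLinearMap.id ℂ X)
    simpa [AP, sub_eq_add_neg] using this
  have h1 := key _ hs (fun x => by simp [refl_apply, add_comm]) (fun ω => by
    rw [map_add, fc_refl, hF]; simp)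
  have h2 := key _ hd (fun x => by simp [refl_apply]; ring) (fun ω => by
    rw [map_smul, map_sub, fc_refl, hF]; simp)
  have h3 : h - refl h = 0 := (smul_eq_zero.1 h2).resolve_left Complex.I_ne_zero
  have h4 : (2 : ℂ) • h = 0 := by
    rw [two_smul]
    calc h + h = (h + refl h) + (h - refl h) := by abel
      _ = 0 := by rw [h1, h3, add_zero]
  exact (smul_eq_zero.1 h4).resolve_left two_ne_zero

/-! ### Bohr almost periodic functions -/

section Bohr

variable {f : ℝ → ℂ} (hf : BohrAP f)

include hf in
lemma bohr_bounded : ∃ C, ∀ x, ‖f x‖ ≤ C := by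
  obtain ⟨L, -, hτ⟩ := hf.2 1 one_pos
  obtain ⟨C, hC⟩ := (isCompact_Icc (a := (0 : ℝ)) (b := L)).exists_bound_of_continuousOn
    hf.1.continuousOn
  refine ⟨1 + C, fun x => ?_⟩
  obtain ⟨τ, hτ, h⟩ := hτ (x - L)
  have h1 := hC (x - τ) ⟨by linarith [hτ.2], by linarith [hτ.1]⟩
  have h2 := norm_sub_norm_le (f x) (f (x - τ))
  rw [norm_sub_rev] at h2
  linarith [h x]

include hf in
lemma bohr_uniformContinuous : UniformContinuous f := by
  rw [Metric.uniformContinuous_iff]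
  intro ε hε
  obtain ⟨L, -, hL⟩ := hf.2 (ε / 3) (by positivity)
  have h1 := (isCompact_Icc (a := (-1 : ℝ)) (b := L + 1)).uniformContinuousOn_of_continuous
    hf.1.continuousOn
  rw [Metric.uniformContinuousOn_iff] at h1
  obtain ⟨δ, hδ, h2⟩ := h1 (ε / 3) (by positivity)
  refine ⟨min δ 1, by positivity, fun {x y} hxy => ?_⟩
  obtain ⟨τ, hτ, h⟩ := hL (x - L)
  have hxy1 : |x - y| < δ := hxy.trans_le (min_le_left _ _)
  have hxy2 := abs_lt.1 ((show |x - y| < min δ 1 from hxy).trans_le (min_le_right _ _))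
  have h3 := h2 (x - τ) ⟨by linarith [hτ.2], by linarith [hτ.1]⟩
    (y - τ) ⟨by linarith [hτ.2], by linarith [hτ.1]⟩ (by
      rw [Real.dist_eq, sub_sub_sub_cancel_right]; exact hxy1)
  have h4 := h x
  have h5 := h y
  rw [← dist_eq_norm] at h4 h5
  rw [dist_comm] at h4
  linarith [dist_triangle4 (f x) (f (x - τ)) (f (y - τ)) (f y)]

/-- A Bohr almost periodic function as an element of `X`. -/
def ofBohr : X :=
  BoundedContinuousFunction.ofNormedAddCommGroup f hf.1 (bohr_bounded hf).choose
    (bohr_bounded hf).choose_spec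

lemma ofBohr_apply (x : ℝ) : ofBohr hf x = f x := rfl

/-- Bohr's definition of almost periodicity implies Bochner's. -/
lemma ofBohr_ap : AP (ofBohr hf) := by
  have hc : Continuous (fun t => tr t (ofBohr hf)) := by
    refine UniformContinuous.continuous ?_
    rw [Metric.uniformContinuous_iff]
    intro ε hε
    obtain ⟨δ, hδ, h⟩ := Metric.uniformContinuous_iff.1 (bohr_uniformContinuous hf) (ε / 2)
      (by positivity)
    refine ⟨δ, hδ, fun {s t} hst => ?_⟩
    refine lt_of_le_of_lt ((BoundedContinuousFunction.dist_le (by positivity)).2 fun x => ?_)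
      (half_lt_self hε)
    refine (h (a := x - s) (b := x - t) ?_).le
    rwa [dist_sub_left]
  refine ⟨hc, Metric.totallyBounded_iff.2 fun ε hε => ?_⟩
  obtain ⟨L, -, hL⟩ := hf.2 (ε / 2) (by positivity)
  have hK := ((isCompact_Icc (a := (0 : ℝ)) (b := L)).image hc).totallyBounded
  obtain ⟨T, hT, hcov⟩ := Metric.totallyBounded_iff.1 hK (ε / 2) (by positivity)
  refine ⟨T, hT, ?_⟩
  rintro _ ⟨t, rfl⟩
  obtain ⟨τ, hτ, h⟩ := hL (t - L)
  have h1 := hcov ⟨t - τ, ⟨by linarith [hτ.2], by linarith [hτ.1]⟩, rfl⟩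
  simp only [Set.mem_iUnion, Metric.mem_ball] at h1 ⊢
  obtain ⟨y, hy, h2⟩ := h1
  refine ⟨y, hy, ?_⟩
  have h3 : dist (tr t (ofBohr hf)) (tr (t - τ) (ofBohr hf)) ≤ ε / 2 := by
    refine (BoundedContinuousFunction.dist_le (by positivity)).2 fun x => ?_
    have := h (x - (t - τ))
    rw [dist_eq_norm, tr_apply, tr_apply, ofBohr_apply, ofBohr_apply]
    rw [show x - (t - τ) - τ = x - t by ring] at this
    exact this.le
  linarith [dist_triangle (tr t (ofBohr hf)) (tr (t - τ) (ofBohr hf)) y]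

lemma fc_ofBohr {ω : ℝ} {c : ℂ} (h : HasFourierCoeff f ω c) : fc ω (ofBohr hf) = c :=
  Mean_eq (h.mono_left U_le)

end Bohr

/-! ### Averages over a lattice and their limits -/

/-- The averaging operator `A_{n,L}` on `X`. -/
def avgCLM (L : ℝ) (n : ℕ) : X →L[ℂ] X := (n : ℂ)⁻¹ • ∑ m ∈ Finset.range n, tr (-(m * L))

lemma avgCLM_apply (L : ℝ) (n : ℕ) (φ : X) :
    avgCLM L n φ = (n : ℂ)⁻¹ • ∑ m ∈ Finset.range n, tr (-(m * L)) φ := by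
  simp [avgCLM]

lemma coe_avgCLM (L : ℝ) (n : ℕ) (φ : X) : ⇑(avgCLM L n φ) = avgOp φ L n := by
  funext x
  rw [avgCLM_apply]
  simp [avgOp]

lemma avgCLM_tr (L : ℝ) (n : ℕ) (s : ℝ) (φ : X) :
    avgCLM L n (tr s φ) = tr s (avgCLM L n φ) := by
  simp only [avgCLM_apply, map_smul, map_sum]
  congr 1
  refine Finset.sum_congr rfl fun m _ => ?_
  rw [← mul_apply_eq_comp, ← mul_apply_eq_comp, ← tr_add, ← tr_add, add_comm]

lemma norm_avgCLM_le (L : ℝ) (n : ℕ) (φ : X) : ‖avgCLM L n φ‖ ≤ ‖φ‖ := by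
  rw [avgCLM_apply, norm_smul, norm_inv, Complex.norm_natCast]
  have h1 : ‖∑ m ∈ Finset.range n, tr (-(m * L)) φ‖ ≤ n * ‖φ‖ := by
    have := (norm_sum_le (Finset.range n) fun m : ℕ => tr (-(m * L)) φ).trans
      (Finset.sum_le_card_nsmul _ _ ‖φ‖ fun m _ => norm_tr_apply_le (-(m * L)) φ)
    rwa [Finset.card_range, nsmul_eq_mul] at this
  rcases Nat.eq_zero_or_pos n with rfl | hn
  · simp
  · rw [inv_mul_le_iff₀ (by positivity)]
    exact h1

lemma avgCLM_mem_hull (L : ℝ) {n : ℕ} (hn : 0 < n) (φ : X) :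
    avgCLM L n φ ∈ convexHull ℝ (Set.range (fun t => tr t φ)) := by
  have h1 : avgCLM L n φ = ∑ m ∈ Finset.range n, (n : ℝ)⁻¹ • tr (-(m * L)) φ := by
    rw [avgCLM_apply, ← Finset.smul_sum, ← Complex.coe_smul]
    simp
  rw [h1]
  refine (convex_convexHull ℝ _).sum_mem (fun _ _ => by positivity) ?_
    fun m _ => subset_convexHull ℝ _ ⟨_, rfl⟩
  have : (n : ℝ) ≠ 0 := by positivity
  simp [this]

lemma fc_avgCLM (ω L : ℝ) (n : ℕ) (φ : X) :
    fc ω (avgCLM L n φ) = ((n : ℂ)⁻¹ * ∑ m ∈ Finset.range n, ch ω (-(m * L))) * fc ω φ := by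
  rw [avgCLM_apply, map_smul, map_sum, smul_eq_mul, mul_assoc, Finset.sum_mul]
  congr 1
  exact Finset.sum_congr rfl fun m _ => fc_tr ω _ φ

lemma ch_eq_one {ω L : ℝ} {N : ℤ} (h : ω * L = N) (m : ℕ) : ch ω (-(m * L)) = 1 := by
  rw [ch_apply, ← Complex.exp_int_mul_two_pi_mul_I (N * m)]
  congr 1
  rw [show -(2 * Real.pi * ω * -(m * L)) = 2 * Real.pi * (ω * L) * m by ring, h]
  push_cast; ring

/-- If the averages of `φ` converge uniformly, then the limit `G` is an element of `X`, lies in the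
closed convex hull of the translates of `φ`, and oscillates no more than `φ`; its Fourier
coefficients are zero where those of `φ` are, and agree with those of `φ` at the
frequencies `ω` with `ω L` an integer. -/
lemma exists_limit {φ : X} {L : ℝ} {g : ℝ → ℂ}
    (hg : TendstoUniformly (fun n x => avgOp φ L n x) g atTop) :
    ∃ G : X, ⇑G = g ∧ G ∈ closure (convexHull ℝ (Set.range (fun t => tr t φ))) ∧
      (∀ s t, ‖tr s G - tr t G‖ ≤ ‖tr s φ - tr t φ‖) ∧
      (∀ ω, fc ω φ = 0 → fc ω G = 0) ∧
      (∀ ω (N : ℤ), ω * L = N → fc ω G = fc ω φ) := by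
  have hg' : TendstoUniformly (fun n => ⇑(avgCLM L n φ)) g atTop := by
    simpa only [coe_avgCLM] using hg
  have hcont : Continuous g :=
    hg'.continuous (Frequently.of_forall fun n => (avgCLM L n φ).continuous)
  have hbd : ∀ x, ‖g x‖ ≤ ‖φ‖ := fun x =>
    le_of_tendsto (hg'.tendsto_at x).norm (Eventually.of_forall fun n =>
      ((avgCLM L n φ).norm_coe_le_norm x).trans (norm_avgCLM_le L n φ))
  let G : X := BoundedContinuousFunction.ofNormedAddCommGroup g hcont ‖φ‖ hbd
  have hG : Tendsto (fun n => avgCLM L n φ) atTop (𝓝 G) :=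
    BoundedContinuousFunction.tendsto_iff_tendstoUniformly.2 hg'
  have hfc : ∀ ω, Tendsto (fun n => fc ω (avgCLM L n φ)) atTop (𝓝 (fc ω G)) := fun ω =>
    ((fc ω).continuous.tendsto _).comp hG
  refine ⟨G, rfl, ?_, fun s t => ?_, fun ω h0 => ?_, fun ω N hN => ?_⟩
  · exact isClosed_closure.mem_of_tendsto hG ((eventually_gt_atTop 0).mono fun n hn =>
      subset_closure (avgCLM_mem_hull L hn φ))
  · have h1 : Tendsto (fun n => ‖tr s (avgCLM L n φ) - tr t (avgCLM L n φ)‖) atTop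
        (𝓝 ‖tr s G - tr t G‖) :=
      ((((tr s).continuous.tendsto _).comp hG).sub (((tr t).continuous.tendsto _).comp hG)).norm
    refine le_of_tendsto h1 (Eventually.of_forall fun n => ?_)
    rw [← avgCLM_tr, ← avgCLM_tr, ← map_sub]
    exact norm_avgCLM_le L n _
  · refine tendsto_nhds_unique (hfc ω) (tendsto_const_nhds.congr fun n => ?_)
    rw [fc_avgCLM, h0, mul_zero]
  · refine tendsto_nhds_unique (hfc ω) (tendsto_const_nhds.congr'
      ((eventually_gt_atTop 0).mono fun n hn => ?_))
    have : (n : ℂ) ≠ 0 := by exact_mod_cast hn.ne'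
    beta_reduce
    rw [fc_avgCLM, Finset.sum_congr rfl fun m _ => ch_eq_one hN m]
    simp [this]

/-- A rational multiple of `ω` times `j! / |ω|` is an integer for all large `j`. -/
lemma exists_int {ω : ℝ} (hω : ω ≠ 0) (q : ℚ) :
    ∀ᶠ j : ℕ in atTop, ∃ N : ℤ, (q : ℝ) * ω * ((Nat.factorial j : ℝ) / |ω|) = N := by
  filter_upwards [eventually_ge_atTop q.den] with j hj
  obtain ⟨k, hk⟩ := Nat.dvd_factorial q.pos hj
  have h1 : (q : ℝ) * (Nat.factorial j : ℝ) = ((q.num * k : ℤ) : ℝ) := by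
    have hd : (q.den : ℝ) ≠ 0 := by exact_mod_cast q.den_ne_zero
    rw [hk, Rat.cast_def]
    push_cast
    field_simp
  have h2 : ω / |ω| = ((SignType.sign ω : ℤ) : ℝ) := by
    rw [div_eq_iff (abs_ne_zero.2 hω)]
    rcases lt_or_gt_of_ne hω with h | h
    · simp [sign_neg h, abs_of_neg h]
    · simp [sign_pos h, abs_of_pos h]
  refine ⟨q.num * k * SignType.sign ω, ?_⟩
  calc (q : ℝ) * ω * ((Nat.factorial j : ℝ) / |ω|)
      = (q : ℝ) * (Nat.factorial j : ℝ) * (ω / |ω|) := by ring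
    _ = _ := by rw [h1, h2]; push_cast; ring

/-- Compactness argument: a sequence in the closed convex hull of the translates of `φ`, with
translates oscillating no more than those of `φ` and Fourier coefficients converging to those of
`φ`, tends to `φ`. Any limit point of the sequence has the Fourier coefficients of `φ`, hence is
`φ` by uniqueness. -/
lemma tendsto_of_fc {φ : X} (hφ : AP φ) {G : ℕ → X}
    (hmem : ∀ j, G j ∈ closure (convexHull ℝ (Set.range (fun t => tr t φ))))
    (hosc : ∀ j s t, ‖tr s (G j) - tr t (G j)‖ ≤ ‖tr s φ - tr t φ‖)
    (hfc : ∀ ω, Tendsto (fun j => fc ω (G j)) atTop (𝓝 (fc ω φ))) :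
    Tendsto G atTop (𝓝 φ) := by
  rw [tendsto_iff_ultrafilter]
  intro V hV
  obtain ⟨g, -, hg⟩ := (isCompact_hull hφ.2).ultrafilter_le_nhds (V.map G) (by
    rw [le_principal_iff]
    exact univ_mem' (f := (V : Filter ℕ)) hmem)
  have hg : Tendsto G V (𝓝 g) := hg
  have hgosc : ∀ s t, ‖tr s g - tr t g‖ ≤ ‖tr s φ - tr t φ‖ := fun s t =>
    le_of_tendsto (((((tr s).continuous.tendsto _).comp hg).sub
      (((tr t).continuous.tendsto _).comp hg)).norm) (Eventually.of_forall fun j => hosc j s t)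
  have hgc : ∀ ω, fc ω g = fc ω φ := fun ω =>
    tendsto_nhds_unique (((fc ω).continuous.tendsto _).comp hg) ((hfc ω).mono_left hV)
  have hAP : AP (φ - g) := by
    refine hφ.dom 2 fun s t => ?_
    rw [map_sub, map_sub, sub_sub_sub_comm, two_mul]
    exact (norm_sub_le _ _).trans (add_le_add_right (hgosc s t) _)
  have h0 := eq_zero_of_fc hAP fun ω => by rw [map_sub, hgc, sub_self]
  rw [sub_eq_zero.1 h0]
  exact hg

end AlmostPeriodic

/-- the periodizations `f_j` (with period `j!/|ω|`) of a limit periodic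
function with one-term basis `ω` converge uniformly to `f`. -/
theorem periodizations_tendstoUniformly (ω : ℝ) (hω : ω ≠ 0)
    (f : ℝ → ℂ) (hf : BohrAP f) (Fhat : ℝ → ℂ)
    (hFhat : ∀ ω' : ℝ, HasFourierCoeff f ω' (Fhat ω'))
    (hfreq : ∀ ω' : ℝ, Fhat ω' ≠ 0 → ∃ q : ℚ, ω' = (q : ℝ) * ω)
    (L : ℕ → ℝ) (hL : ∀ j : ℕ, L j = (Nat.factorial j : ℝ) / |ω|)
    (fj : ℕ → ℝ → ℂ)
    (hfj : ∀ j : ℕ, TendstoUniformly (fun n x => avgOp f (L j) n x) (fj j) atTop) :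
    TendstoUniformly (fun j x => fj j x) f atTop := by
  let φ := AlmostPeriodic.ofBohr hf
  have hφ : AlmostPeriodic.AP φ := AlmostPeriodic.ofBohr_ap hf
  have hφc : ∀ ω', AlmostPeriodic.fc ω' φ = Fhat ω' := fun ω' =>
    AlmostPeriodic.fc_ofBohr hf (hFhat ω')
  choose G hGfj hGmem hGosc hGzero hGint using fun j =>
    AlmostPeriodic.exists_limit (φ := φ) (hfj j)
  -- every Fourier coefficient of `G j` is eventually that of `φ`
  have hfc : ∀ ω', ∀ᶠ j in atTop, AlmostPeriodic.fc ω' (G j) = AlmostPeriodic.fc ω' φ := by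
    intro ω'
    by_cases h0 : Fhat ω' = 0
    · refine Eventually.of_forall fun j => ?_
      rw [hGzero j ω' ((hφc ω').trans h0), hφc, h0]
    · obtain ⟨q, rfl⟩ := hfreq ω' h0
      filter_upwards [AlmostPeriodic.exists_int hω q] with j hj
      obtain ⟨N, hN⟩ := hj
      exact hGint j _ N (by rw [hL]; exact hN)
  have hlim : Tendsto G atTop (𝓝 φ) := AlmostPeriodic.tendsto_of_fc hφ hGmem hGosc fun ω' =>
    tendsto_const_nhds.congr' ((hfc ω').mono fun _ h => h.symm)
  have : TendstoUniformly (fun j => ⇑(G j)) f atTop :=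
    BoundedContinuousFunction.tendsto_iff_tendstoUniformly.1 hlim
  simpa only [hGfj] using this
end
end

section
/- Let f : ℝ → ℂ be Bohr almost periodic. Then the mean value of f exists: there is a complex number M(f) such that (1/(2L)) ∫_{−L}^{L} f(x) dx converges to M(f) as L → ∞. -/
/-!
The mean value is obtained from the Cauchy criterion. Write `I T = ∫ y in -T..T, f y`. Given `ε > 0`
with inclusion length `l`, and `C` a bound for `‖f‖`, every `x` has an `ε`-almost period
`τ ∈ [x, x + l]`; sliding the window `[x - T, x + T]` to `[τ - T, τ + T]` costs at most `2 l C`, and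
from there to `[-T, T]` at most `2 T ε` (`norm_window_sub_le`). Hence the double integral
`∫ x in -S..S, ∫ y in -T..T, f (x + y)` differs from `2 S * I T` by at most
`2 S (2 T ε + 2 l C)` (`norm_double_integral_sub_le`). The double integral is symmetric in `S` and
`T` by Fubini, so comparing it with both `2 S * I T` and `2 T * I S` shows that the means over
`[-S, S]` and `[-T, T]` differ by at most `2 ε + l C (1 / S + 1 / T)`.
-/

open MeasureTheory Filter Topology
open scoped ENNReal NNReal

noncomputable section

/-- A Bohr almost periodic function is bounded: a `1`-almost period in `[x, x + L]` moves `x` into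
the compact interval `[-L, 0]`. -/
lemma BohrAP.bounded {f : ℝ → ℂ} (hf : BohrAP f) : ∃ C : ℝ, 0 ≤ C ∧ ∀ x, ‖f x‖ ≤ C := by
  obtain ⟨hc, h⟩ := hf
  obtain ⟨L, hL, hτ⟩ := h 1 one_pos
  obtain ⟨C, hC⟩ := (isCompact_Icc (a := -L) (b := 0)).exists_bound_of_continuousOn hc.continuousOn
  have hbd : ∀ x, ‖f x‖ ≤ C + 1 := by
    intro x
    obtain ⟨τ, ⟨h1, h2⟩, h3⟩ := hτ x
    have h4 := hC (x - τ) ⟨by linarith, by linarith⟩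
    have h5 := norm_sub_norm_le (f x) (f (x - τ))
    rw [norm_sub_rev] at h5
    linarith [h3 x]
  exact ⟨C + 1, (norm_nonneg _).trans (hbd 0), hbd⟩

/-- Integrals over windows of the same length differ little, wherever the windows are centred. -/
lemma norm_window_sub_le {f : ℝ → ℂ} (hc : Continuous f) {C l ε T : ℝ} (hC : ∀ x, ‖f x‖ ≤ C)
    (hT : 0 < T)
    (hl : ∀ a : ℝ, ∃ τ, τ ∈ Set.Icc a (a + l) ∧ ∀ x : ℝ, ‖f (x - τ) - f x‖ < ε) (x : ℝ) :
    ‖(∫ y in (-T)..T, f (x + y)) - ∫ y in (-T)..T, f y‖ ≤ 2 * T * ε + 2 * (l * C) := by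
  obtain ⟨τ, ⟨h1, h2⟩, h3⟩ := hl x
  have hi : ∀ a b, IntervalIntegrable f volume a b := fun a b => hc.intervalIntegrable a b
  have hC0 : 0 ≤ C := (norm_nonneg _).trans (hC 0)
  -- Sliding the centre from `x` to `τ` only changes the two ends of the window.
  have hslide : ‖(∫ y in (-T)..T, f (x + y)) - ∫ y in (-T)..T, f (τ + y)‖ ≤ 2 * (l * C) := by
    rw [intervalIntegral.integral_comp_add_left, intervalIntegral.integral_comp_add_left,
      intervalIntegral.integral_interval_sub_interval_comm (hi _ _) (hi _ _) (hi _ _)]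
    have hend : ∀ s, ‖∫ y in (x + s)..(τ + s), f y‖ ≤ l * C := by
      intro s
      refine (intervalIntegral.norm_integral_le_of_norm_le_const fun y _ => hC y).trans ?_
      rw [abs_of_nonneg (by linarith), mul_comm]
      exact mul_le_mul_of_nonneg_right (by linarith) hC0
    refine (norm_sub_le _ _).trans ?_
    linarith [hend (-T), hend T]
  have hshift : ‖(∫ y in (-T)..T, f (τ + y)) - ∫ y in (-T)..T, f y‖ ≤ 2 * T * ε := by
    rw [← intervalIntegral.integral_sub ((by fun_prop : Continuous _).intervalIntegrable _ _)
      (hi _ _)]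
    have hpt : ∀ y, ‖f (τ + y) - f y‖ ≤ ε := by
      intro y
      have h4 := h3 (τ + y)
      rw [add_sub_cancel_left, norm_sub_rev] at h4
      exact h4.le
    refine (intervalIntegral.norm_integral_le_of_norm_le_const fun y _ => hpt y).trans ?_
    rw [abs_of_nonneg (by linarith)]
    linarith
  have htri := norm_sub_le_norm_sub_add_norm_sub (∫ y in (-T)..T, f (x + y))
    (∫ y in (-T)..T, f (τ + y)) (∫ y in (-T)..T, f y)
  linarith

lemma norm_double_integral_sub_le {f : ℝ → ℂ} (hc : Continuous f) {C l ε S T : ℝ}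
    (hC : ∀ x, ‖f x‖ ≤ C) (hS : 0 < S) (hT : 0 < T)
    (hl : ∀ a : ℝ, ∃ τ, τ ∈ Set.Icc a (a + l) ∧ ∀ x : ℝ, ‖f (x - τ) - f x‖ < ε) :
    ‖(∫ x in (-S)..S, ∫ y in (-T)..T, f (x + y)) - 2 * (S : ℂ) * ∫ y in (-T)..T, f y‖
      ≤ 2 * S * (2 * T * ε + 2 * (l * C)) := by
  have hconst : 2 * (S : ℂ) * ∫ y in (-T)..T, f y = ∫ _x in (-S)..S, ∫ y in (-T)..T, f y := by
    rw [intervalIntegral.integral_const, Complex.real_smul]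
    push_cast
    ring
  have hcont : Continuous fun x => ∫ y in (-T)..T, f (x + y) :=
    intervalIntegral.continuous_parametric_intervalIntegral_of_continuous'
      (f := fun x y => f (x + y)) (by unfold Function.uncurry; fun_prop) _ _
  rw [hconst, ← intervalIntegral.integral_sub (hcont.intervalIntegrable _ _)
    (continuous_const.intervalIntegrable _ _)]
  refine (intervalIntegral.norm_integral_le_of_norm_le_const fun x _ =>
    norm_window_sub_le hc hC hT hl x).trans ?_
  rw [abs_of_nonneg (by linarith)]
  linarith

/-- Fubini, together with the symmetry of `f (x + y)` in `x` and `y`. -/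
lemma double_integral_comm {f : ℝ → ℂ} (hc : Continuous f) (S T : ℝ) :
    (∫ x in (-S)..S, ∫ y in (-T)..T, f (x + y)) = ∫ x in (-T)..T, ∫ y in (-S)..S, f (x + y) := by
  rw [intervalIntegral_intervalIntegral_swap]
  · simp_rw [add_comm]
  · have hK : IsCompact (Set.uIcc (-S) S ×ˢ Set.uIcc (-T) T) := isCompact_uIcc.prod isCompact_uIcc
    have hcont : Continuous (Function.uncurry fun x y => f (x + y)) := by
      unfold Function.uncurry
      fun_prop
    exact (hcont.continuousOn.integrableOn_compact hK).mono_set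
      (Set.prod_mono Set.uIoc_subset_uIcc Set.uIoc_subset_uIcc)

/-- The mean over `[-T, T]` is close to the normalised double integral, uniformly in `S`. -/
lemma norm_mean_sub_le {f : ℝ → ℂ} (hc : Continuous f) {C l ε S T : ℝ}
    (hC : ∀ x, ‖f x‖ ≤ C) (hS : 0 < S) (hT : 0 < T)
    (hl : ∀ a : ℝ, ∃ τ, τ ∈ Set.Icc a (a + l) ∧ ∀ x : ℝ, ‖f (x - τ) - f x‖ < ε) :
    ‖(4 * (S : ℂ) * T)⁻¹ * (∫ x in (-S)..S, ∫ y in (-T)..T, f (x + y))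
      - (2 * (T : ℂ))⁻¹ * ∫ y in (-T)..T, f y‖ ≤ ε + l * C / T := by
  have hSC : (S : ℂ) ≠ 0 := by exact_mod_cast hS.ne'
  have hTC : (T : ℂ) ≠ 0 := by exact_mod_cast hT.ne'
  have hfac : ∀ K I : ℂ, (4 * (S : ℂ) * T)⁻¹ * K - (2 * (T : ℂ))⁻¹ * I
      = ((4 * S * T)⁻¹ : ℝ) * (K - 2 * (S : ℂ) * I) := by
    intro K I
    push_cast
    field_simp
    ring
  rw [hfac, norm_mul, Complex.norm_real, Real.norm_of_nonneg (by positivity)]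
  calc (4 * S * T)⁻¹ * _ ≤ (4 * S * T)⁻¹ * (2 * S * (2 * T * ε + 2 * (l * C))) :=
        mul_le_mul_of_nonneg_left (norm_double_integral_sub_le hc hC hS hT hl) (by positivity)
    _ = ε + l * C / T := by field_simp; ring

/-- existence of the mean value of a Bohr almost periodic function. -/
theorem mean_value_exists (f : ℝ → ℂ) (hf : BohrAP f) :
    ∃ M : ℂ, Tendsto (fun L : ℝ => (2 * (L : ℂ))⁻¹ * ∫ x in (-L)..L, f x) atTop (nhds M) := by
  obtain ⟨C, hC0, hC⟩ := hf.bounded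
  obtain ⟨hc, h⟩ := hf
  refine cauchySeq_tendsto_of_complete (Metric.cauchySeq_iff.2 fun ε hε => ?_)
  obtain ⟨l, hl0, hl⟩ := h (ε / 8) (by positivity)
  -- Beyond this threshold the error `l * C / T` is at most `ε / 8`.
  refine ⟨max 1 (8 * (l * C) / ε), fun S hS T hT => ?_⟩
  have hsmall : ∀ R, R ≥ max 1 (8 * (l * C) / ε) → 0 < R ∧ l * C / R ≤ ε / 8 := by
    intro R hR
    have hR0 : 0 < R := one_pos.trans_le ((le_max_left _ _).trans hR)
    have hR1 : 8 * (l * C) / ε ≤ R := (le_max_right _ _).trans hR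
    rw [div_le_iff₀ hε] at hR1
    refine ⟨hR0, ?_⟩
    rw [div_le_iff₀ hR0]
    linarith
  obtain ⟨hS0, hS1⟩ := hsmall S hS
  obtain ⟨hT0, hT1⟩ := hsmall T hT
  have hST := norm_mean_sub_le hc hC hS0 hT0 hl
  have hTS := norm_mean_sub_le hc hC hT0 hS0 hl
  rw [double_integral_comm hc T S, mul_right_comm (4 : ℂ), norm_sub_rev] at hTS
  rw [dist_eq_norm]
  refine (norm_sub_le_norm_sub_add_norm_sub _ _ _).trans_lt
    ((add_le_add hTS hST).trans_lt ?_)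
  linarith
end
end

section
/- Let f : ℝ → ℂ be Bohr almost periodic with Fourier coefficient function \hat f. Then the family (|\hat f(ω)|²)_{ω ∈ ℝ} is summable, and Parseval's identity holds: lim_{L→∞} (1/(2L)) ∫_{−L}^{L} |f(x)|² dx = ∑'_{ω ∈ ℝ} |\hat f(ω)|² (in particular the limit on the left-hand side exists). Consequently \hat f(ω) ≠ 0 for at most countably many ω ∈ ℝ. -/
/-!
Parseval's identity is reduced to the uniqueness theorem for almost periodic functions.
Write `M` for the symmetric mean value (`HasMean`) and `wave ω x = exp (2πiωx)`.

* Autocorrelation (`IsAP.exists_autocorr`). The function `φ t = M_x (f (x + t) * conj (f x))` is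
  almost periodic, `φ 0 = M (|f|²)`, and its coefficient at `ω` is `|Fhat ω|²`.
* Bessel's inequality (`bessel`) makes `∑ |Fhat ω|²` summable, so `g t = ∑' |Fhat ω|² * wave ω t`
  converges uniformly, is almost periodic, and has the same coefficients as `φ`
  (`isAP_waveSeries`).
* Uniqueness (`IsAP.eq_zero`). An almost periodic function with vanishing coefficients vanishes
  at `0`. Applied to `φ - g` this gives `M (|f|²) = φ 0 = g 0 = ∑' |Fhat ω|²`.

Uniqueness is proved by comparison with long circles. Let `h` be almost periodic with all
coefficients zero, and let `m = M (|h|²)`. The averages of `h * wave ω` over `[-T, T]` tend to `0`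
uniformly in `ω` (`IsAP.eventually_forall_symAvg_le`): on compact sets of frequencies by continuity
in `ω`, and near infinity by the Riemann–Lebesgue lemma on one fixed interval. Take `2T` to be a
large `ε`-almost period of `h` and wrap `h` restricted to `[-T, T)` around the circle of length
`2T`. All Fourier coefficients of the wrapped function `H` are at most `δ`, so Parseval on the
circle bounds the `L²` norm of its autocorrelation `ψ` by `δ * sup |H|` (`circle_autocorr_le`). On
the other hand `h` has a finite `ε`-net of translates, whose size does not depend on `T`; every
point of the circle therefore lies within a translate, by one of boundedly many shifts, of the set
where `|ψ| ≥ |m| / 2`, which bounds the `L²` norm of `ψ` below (`circle_net_le`). As `δ → 0` this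
forces `m = 0` (`IsAP.mean_sq_eq_zero`). The finite net also turns `h 0 ≠ 0` into a positive lower
bound for `m`.

Almost periodicity is used in Bochner's form `IsAP` (total boundedness of the set of translates),
which is visibly stable under sums and products.
-/

open MeasureTheory Filter Topology
open scoped ENNReal NNReal

noncomputable section

open ComplexConjugate AddCircle

/-! ### Autocorrelation on a circle -/

/-- A bounded function on a circle with small Fourier coefficients has an autocorrelation that is
small in `L²`: the coefficients of the autocorrelation are `‖fourierCoeff H n‖ ^ 2`, so Parseval
gives `∑ ‖fourierCoeff H n‖ ^ 4 ≤ δ ^ 2 * ∑ ‖fourierCoeff H n‖ ^ 2`. -/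
theorem circle_autocorr_le {P : ℝ} [Fact (0 < P)] (H : AddCircle P → ℂ) (hm : Measurable H)
    {C : ℝ} (hC : ∀ y, ‖H y‖ ≤ C) {δ : ℝ} (hδ : ∀ n, ‖fourierCoeff H n‖ ≤ δ) :
    Measurable (fun t => ∫ x, H (x + t) * conj (H x) ∂haarAddCircle) ∧
    (∀ t, ‖∫ x, H (x + t) * conj (H x) ∂haarAddCircle‖ ≤ C * C) ∧
    ∫ t, ‖∫ x, H (x + t) * conj (H x) ∂haarAddCircle‖ ^ 2 ∂haarAddCircle ≤ δ ^ 2 * C ^ 2 := by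
  set ψ : AddCircle P → ℂ := fun t => ∫ x, H (x + t) * conj (H x) ∂haarAddCircle with hψ
  have hC0 : 0 ≤ C := (norm_nonneg _).trans (hC 0)
  have hδ0 : 0 ≤ δ := (norm_nonneg _).trans (hδ 0)
  have hmψ : Measurable ψ := by
    apply StronglyMeasurable.measurable
    refine StronglyMeasurable.integral_prod_right
      (f := fun t x : AddCircle P => H (x + t) * conj (H x)) ?_
    apply Measurable.stronglyMeasurable
    simp only [Function.uncurry_def]
    fun_prop
  have hbψ : ∀ t, ‖ψ t‖ ≤ C * C := by
    intro t
    have := norm_integral_le_of_norm_le_const (μ := haarAddCircle (T := P))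
      (f := fun x => H (x + t) * conj (H x)) (C := C * C) (ae_of_all _ fun x => by
        rw [norm_mul, RCLike.norm_conj]; gcongr <;> apply hC)
    simpa using this
  refine ⟨hmψ, hbψ, ?_⟩
  have hcoef : ∀ n, fourierCoeff ψ n = conj (fourierCoeff H n) * fourierCoeff H n := by
    intro n
    have h1 : fourierCoeff ψ n = ∫ t, ∫ x, fourier (-n) t * (H (x + t) * conj (H x))
        ∂haarAddCircle ∂haarAddCircle := by
      simp only [fourierCoeff, hψ, smul_eq_mul]
      congr 1; ext t
      rw [integral_const_mul]
    rw [h1, integral_integral_swap]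
    · have h2 : ∀ x : AddCircle P, ∫ t, fourier (-n) t * (H (x + t) * conj (H x)) ∂haarAddCircle
          = (conj (fourier (-n) x * H x)) * fourierCoeff H n := by
        intro x
        rw [← integral_add_left_eq_self _ (-x), fourierCoeff, ← integral_const_mul]
        congr 1; ext t
        simp only [add_neg_cancel_left, smul_eq_mul, map_mul, ← fourier_neg, neg_neg]
        have : (fourier (-n) (-x + t) : ℂ) = fourier n x * fourier (-n) t := by
          simp only [fourier_apply, ← Circle.coe_mul, ← AddCircle.toCircle_add]
          congr 2
          simp
        rw [this]; ring
      simp_rw [h2]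
      rw [integral_mul_const, integral_conj]
      rfl
    · apply Integrable.of_bound (C := 1 * (C * C))
      · apply Measurable.aestronglyMeasurable
        have := (fourier (T := P) (-n)).continuous.measurable
        simp only [Function.uncurry_def]
        fun_prop
      · refine ae_of_all _ fun p => ?_
        simp only [Function.uncurry_def, norm_mul, RCLike.norm_conj]
        gcongr
        · exact (Circle.norm_coe _).le
        all_goals apply hC
  have hmemH : MemLp H 2 (haarAddCircle (T := P)) :=
    MemLp.of_bound hm.aestronglyMeasurable C (ae_of_all _ hC)
  have hmemψ : MemLp ψ 2 (haarAddCircle (T := P)) :=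
    MemLp.of_bound hmψ.aestronglyMeasurable _ (ae_of_all _ hbψ)
  have pars : ∀ {F : AddCircle P → ℂ}, MemLp F 2 (haarAddCircle (T := P)) →
      HasSum (fun n => ‖fourierCoeff F n‖ ^ 2) (∫ t, ‖F t‖ ^ 2 ∂haarAddCircle) := by
    intro F hF
    convert hasSum_sq_fourierCoeff hF.toLp using 1
    · simp [fourierCoeff_congr_ae hF.coeFn_toLp]
    · apply integral_congr_ae
      filter_upwards [hF.coeFn_toLp] with x hx
      rw [hx]
  have hH := pars hmemH
  -- Termwise, `‖fourierCoeff H n‖ ^ 4 ≤ δ ^ 2 * ‖fourierCoeff H n‖ ^ 2`.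
  have h3 := hasSum_le (fun n => ?_) (pars hmemψ) (hH.mul_left (δ ^ 2))
  · refine h3.trans ?_
    gcongr
    have := norm_integral_le_of_norm_le_const (μ := haarAddCircle (T := P))
      (f := fun x => ‖H x‖ ^ 2) (C := C ^ 2) (ae_of_all _ fun x => by
        rw [norm_pow, norm_norm]; gcongr; apply hC)
    refine (le_abs_self _).trans ?_
    simpa using this
  · rw [hcoef, norm_mul, RCLike.norm_conj, ← pow_two, ← pow_mul, pow_mul, pow_two]
    gcongr
    exact hδ n

/-- If finitely many translates of the set `{m ≤ ‖ψ‖}` cover the circle, then `ψ` is not small in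
`L²`. -/
theorem circle_net_le {P : ℝ} [Fact (0 < P)] (ψ : AddCircle P → ℂ) (hm : Measurable ψ)
    {C : ℝ} (hC : ∀ y, ‖ψ y‖ ≤ C) {ι : Type*} [Fintype ι] (r : ι → AddCircle P) {m : ℝ}
    (hm0 : 0 ≤ m) (hr : ∀ t, ∃ i, m ≤ ‖ψ (t - r i)‖) :
    m ^ 2 ≤ Fintype.card ι * ∫ t, ‖ψ t‖ ^ 2 ∂haarAddCircle := by
  have hinteg : ∀ i, Integrable (fun t => ‖ψ (t - r i)‖ ^ 2) (haarAddCircle (T := P)) := by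
    intro i
    refine Integrable.of_bound (C := C ^ 2) ?_ ?_
    · apply Measurable.aestronglyMeasurable
      fun_prop
    · refine ae_of_all _ fun p => ?_
      rw [norm_pow, norm_norm]; gcongr; apply hC
  have h1 : ∑ i, ∫ t, ‖ψ (t - r i)‖ ^ 2 ∂haarAddCircle
      = Fintype.card ι * ∫ t, ‖ψ t‖ ^ 2 ∂haarAddCircle := by
    simp_rw [integral_sub_right_eq_self (fun t => ‖ψ t‖ ^ 2)]
    simp
  rw [← h1, ← integral_finsetSum _ (fun i _ => hinteg i)]
  have h2 : m ^ 2 = ∫ _t : AddCircle P, m ^ 2 ∂haarAddCircle := by simp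
  rw [h2]
  apply integral_mono (integrable_const _) (integrable_finsetSum _ (fun i _ => hinteg i))
  intro t
  obtain ⟨i, hi⟩ := hr t
  calc m ^ 2 ≤ ‖ψ (t - r i)‖ ^ 2 := by gcongr
    _ ≤ _ := Finset.single_le_sum (f := fun i => ‖ψ (t - r i)‖ ^ 2)
      (fun _ _ => by positivity) (Finset.mem_univ i)

/-! ### Symmetric averages and characters -/

/-- The average of `F` over `[-L, L]`; meaningful for `0 < L`. -/
def symAvg (F : ℝ → ℂ) (L : ℝ) : ℂ := (2 * (L : ℂ))⁻¹ * ∫ x in (-L)..L, F x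

/-- The character `x ↦ exp (2πiωx)` of frequency `ω`. -/
def wave (ω x : ℝ) : ℂ := Complex.exp (((2 * Real.pi * ω * x : ℝ) : ℂ) * Complex.I)

/-- Almost periodicity in Bochner's form: `f` is continuous and its translates are totally bounded
for the sup norm. Total boundedness is encoded by a finite colouring of the shifts such that shifts
of equal colour give `ε`-close translates. -/
structure IsAP (f : ℝ → ℂ) : Prop where
  cont : Continuous f
  fin : ∀ ε : ℝ, 0 < ε → ∃ (ι : Type) (_ : Finite ι) (c : ℝ → ι),
    ∀ s t, c s = c t → ∀ x, ‖f (x + s) - f (x + t)‖ ≤ ε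

theorem norm_wave (ω x : ℝ) : ‖wave ω x‖ = 1 := Complex.norm_exp_ofReal_mul_I _

theorem wave_add (ω x y : ℝ) : wave ω (x + y) = wave ω x * wave ω y := by
  simp only [wave, ← Complex.exp_add]; congr 1; push_cast; ring

theorem wave_mul (ω ν x : ℝ) : wave ω x * wave ν x = wave (ω + ν) x := by
  simp only [wave, ← Complex.exp_add]; congr 1; push_cast; ring

theorem wave_zero (x : ℝ) : wave 0 x = 1 := by simp [wave]

theorem wave_zero_right (ω : ℝ) : wave ω 0 = 1 := by simp [wave]

theorem conj_wave (ω x : ℝ) : conj (wave ω x) = wave (-ω) x := by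
  simp only [wave, ← Complex.exp_conj]; congr 1; simp [Complex.conj_ofNat]

theorem continuous_wave₂ : Continuous (fun p : ℝ × ℝ => wave p.1 p.2) := by
  unfold wave; fun_prop

@[fun_prop]
theorem continuous_wave (ω : ℝ) : Continuous (wave ω) := by
  unfold wave; fun_prop

theorem norm_symAvg_le_of_abs_le {F : ℝ → ℂ} {C L : ℝ} (hL : 0 < L)
    (h : ∀ x, |x| ≤ L → ‖F x‖ ≤ C) : ‖symAvg F L‖ ≤ C := by
  have := intervalIntegral.norm_integral_le_of_norm_le_const (a := -L) (b := L) (f := F) (C := C)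
    (fun x hx => by
      rw [Set.uIoc_of_le (by linarith)] at hx
      exact h x (abs_le.2 ⟨hx.1.le, hx.2⟩))
  rw [symAvg, norm_mul, norm_inv, norm_mul, Complex.norm_real, Complex.norm_ofNat,
    Real.norm_of_nonneg hL.le, inv_mul_le_iff₀ (by positivity)]
  rw [sub_neg_eq_add, abs_of_pos (by linarith)] at this
  linarith

theorem norm_symAvg_le {F : ℝ → ℂ} {C L : ℝ} (hL : 0 < L) (h : ∀ x, ‖F x‖ ≤ C) :
    ‖symAvg F L‖ ≤ C := norm_symAvg_le_of_abs_le hL fun x _ => h x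

theorem symAvg_add {F G : ℝ → ℂ} (hF : Continuous F) (hG : Continuous G) (L : ℝ) :
    symAvg (fun x => F x + G x) L = symAvg F L + symAvg G L := by
  simp only [symAvg]
  rw [intervalIntegral.integral_add (hF.intervalIntegrable _ _) (hG.intervalIntegrable _ _),
    mul_add]

theorem symAvg_sub {F G : ℝ → ℂ} (hF : Continuous F) (hG : Continuous G) (L : ℝ) :
    symAvg (fun x => F x - G x) L = symAvg F L - symAvg G L := by
  simp only [symAvg]
  rw [intervalIntegral.integral_sub (hF.intervalIntegrable _ _) (hG.intervalIntegrable _ _),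
    mul_sub]

theorem symAvg_const_mul (c : ℂ) (F : ℝ → ℂ) (L : ℝ) :
    symAvg (fun x => c * F x) L = c * symAvg F L := by
  simp only [symAvg, intervalIntegral.integral_const_mul]; ring

theorem symAvg_conj (F : ℝ → ℂ) (L : ℝ) :
    symAvg (fun x => conj (F x)) L = conj (symAvg F L) := by
  simp only [symAvg, intervalIntegral.intervalIntegral_eq_integral_uIoc, integral_conj]
  split_ifs <;> simp [Complex.conj_ofNat]

theorem norm_symAvg_sub_le {F G : ℝ → ℂ} (hF : Continuous F) (hG : Continuous G) {L C : ℝ}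
    (hL : 0 < L) (h : ∀ x, ‖F x - G x‖ ≤ C) : ‖symAvg F L - symAvg G L‖ ≤ C := by
  rw [← symAvg_sub hF hG]; exact norm_symAvg_le hL h

theorem norm_symAvg_shift_sub_le {F : ℝ → ℂ} (hF : Continuous F) {C L : ℝ} (hL : 0 < L)
    (h : ∀ x, ‖F x‖ ≤ C) (a : ℝ) :
    ‖symAvg (fun x => F (x + a)) L - symAvg F L‖ ≤ C * |a| / L := by
  have hi : ∀ u v, IntervalIntegrable F volume u v := fun u v => hF.intervalIntegrable _ _
  have h1 : (∫ x in (-L)..L, F (x + a)) - ∫ x in (-L)..L, F x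
      = (∫ x in L..(L + a), F x) - ∫ x in (-L)..(-L + a), F x := by
    rw [intervalIntegral.integral_comp_add_right]
    have e1 := intervalIntegral.integral_add_adjacent_intervals (hi (-L) L) (hi L (L + a))
    have e2 := intervalIntegral.integral_add_adjacent_intervals (hi (-L) (-L + a))
      (hi (-L + a) (L + a))
    linear_combination e2 - e1
  have h2 := intervalIntegral.norm_integral_le_of_norm_le_const (a := L) (b := L + a)
    (fun x _ => h x)
  have h3 := intervalIntegral.norm_integral_le_of_norm_le_const (a := -L) (b := -L + a)
    (fun x _ => h x)
  simp only [add_sub_cancel_left] at h2 h3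
  rw [symAvg, symAvg, ← mul_sub, h1, norm_mul, norm_inv, norm_mul, Complex.norm_real,
    Complex.norm_ofNat, Real.norm_of_nonneg hL.le, inv_mul_le_iff₀ (by positivity)]
  refine (norm_sub_le _ _).trans ((add_le_add h2 h3).trans (le_of_eq ?_))
  field_simp; ring

theorem symAvg_swap {G : ℝ → ℝ → ℂ} (hG : Continuous (Function.uncurry G)) (L S : ℝ) :
    symAvg (fun a => symAvg (fun x => G a x) L) S
      = symAvg (fun x => symAvg (fun a => G a x) S) L := by
  simp only [symAvg, intervalIntegral.integral_const_mul]
  rw [intervalIntegral_intervalIntegral_swap]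
  · ring
  · refine IntegrableOn.mono_set (hG.continuousOn.integrableOn_compact
      (isCompact_uIcc.prod isCompact_uIcc)) (Set.prod_mono Set.uIoc_subset_uIcc Set.uIoc_subset_uIcc)

theorem continuous_symAvg {G : ℝ → ℝ → ℂ} (hG : Continuous (Function.uncurry G)) (L : ℝ) :
    Continuous (fun a => symAvg (fun x => G a x) L) := by
  unfold symAvg
  exact continuous_const.mul
    (intervalIntegral.continuous_parametric_intervalIntegral_of_continuous' hG _ _)

/-! ### Almost periodic functions -/

/-- A finite `ε`-net of translates. -/
theorem IsAP.net {f : ℝ → ℂ} (hf : IsAP f) {ε : ℝ} (hε : 0 < ε) :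
    ∃ (ι : Type) (_ : Fintype ι) (r : ι → ℝ), ∀ t, ∃ i, ∀ x, ‖f (x + t) - f (x + r i)‖ ≤ ε := by
  obtain ⟨ι, hι, c, hc⟩ := hf.fin ε hε
  exact ⟨ι, Fintype.ofFinite ι, Function.invFun c, fun t =>
    ⟨c t, fun x => hc _ _ (Function.invFun_eq ⟨t, rfl⟩).symm x⟩⟩

theorem IsAP.bdd {f : ℝ → ℂ} (hf : IsAP f) : ∃ C, 0 < C ∧ ∀ x, ‖f x‖ ≤ C := by
  obtain ⟨ι, _, r, hr⟩ := hf.net one_pos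
  refine ⟨∑ i, ‖f (r i)‖ + 1, by positivity, fun t => ?_⟩
  obtain ⟨i, hi⟩ := hr t
  have h1 := hi 0
  simp only [zero_add] at h1
  have h2 := Finset.single_le_sum (f := fun i => ‖f (r i)‖)
      (fun _ _ => by positivity) (Finset.mem_univ i)
  have h3 := norm_le_insert' (f t) (f (r i))
  linarith

theorem IsAP.conj {f : ℝ → ℂ} (hf : IsAP f) : IsAP (fun x => conj (f x)) where
  cont := Complex.continuous_conj.comp hf.cont
  fin ε hε := by
    obtain ⟨ι, hι, c, hc⟩ := hf.fin ε hε
    exact ⟨ι, hι, c, fun s t h x => by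
      rw [← map_sub, RCLike.norm_conj]; exact hc s t h x⟩

theorem IsAP.add {f g : ℝ → ℂ} (hf : IsAP f) (hg : IsAP g) : IsAP (fun x => f x + g x) where
  cont := hf.cont.add hg.cont
  fin ε hε := by
    obtain ⟨ι, hι, c, hc⟩ := hf.fin (ε / 2) (half_pos hε)
    obtain ⟨κ, hκ, d, hd⟩ := hg.fin (ε / 2) (half_pos hε)
    refine ⟨ι × κ, inferInstance, fun t => (c t, d t), fun s t h x => ?_⟩
    simp only [Prod.mk.injEq] at h
    have h1 := hc s t h.1 x
    have h2 := hd s t h.2 x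
    rw [add_sub_add_comm]
    exact (norm_add_le _ _).trans (by linarith)

theorem IsAP.mul {f g : ℝ → ℂ} (hf : IsAP f) (hg : IsAP g) : IsAP (fun x => f x * g x) where
  cont := hf.cont.mul hg.cont
  fin ε hε := by
    obtain ⟨C, hC, hfC⟩ := hf.bdd
    obtain ⟨D, hD, hgD⟩ := hg.bdd
    obtain ⟨ι, hι, c, hc⟩ := hf.fin (ε / (2 * D)) (by positivity)
    obtain ⟨κ, hκ, d, hd⟩ := hg.fin (ε / (2 * C)) (by positivity)
    refine ⟨ι × κ, inferInstance, fun t => (c t, d t), fun s t h x => ?_⟩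
    simp only [Prod.mk.injEq] at h
    have h1 := hc s t h.1 x
    have h2 := hd s t h.2 x
    have h3 : f (x + s) * g (x + s) - f (x + t) * g (x + t)
      = (f (x + s) - f (x + t)) * g (x + s) + f (x + t) * (g (x + s) - g (x + t)) := by ring
    rw [h3]
    calc _ ≤ ε / (2 * D) * D + C * (ε / (2 * C)) := by
          refine (norm_add_le _ _).trans ?_
          rw [norm_mul, norm_mul]
          gcongr
          · exact hgD _
          · exact hfC _
      _ = ε := by field_simp; ring

theorem IsAP.const (c : ℂ) : IsAP (fun _ => c) where
  cont := continuous_const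
  fin ε hε := ⟨Unit, inferInstance, fun _ => (), fun _ _ _ _ => by simpa using hε.le⟩

theorem IsAP.sum {ι : Type*} (s : Finset ι) (f : ι → ℝ → ℂ) (hf : ∀ i, IsAP (f i)) :
    IsAP (fun x => ∑ i ∈ s, f i x) := by
  classical
  induction s using Finset.induction_on with
  | empty => simpa using IsAP.const 0
  | insert a s ha ih =>
    simp only [Finset.sum_insert ha]
    exact (hf a).add ih

/-- A map into a totally bounded set yields a finite colouring whose classes have small image. -/
theorem exists_coloring {X : Type*} [PseudoMetricSpace X] {K : Set X} (hK : TotallyBounded K)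
    (u : ℝ → X) (hu : ∀ t, u t ∈ K) {η : ℝ} (hη : 0 < η) :
    ∃ (ι : Type) (_ : Finite ι) (c : ℝ → ι), ∀ s t, c s = c t → dist (u s) (u t) < η := by
  obtain ⟨S, hS, hKS⟩ := Metric.totallyBounded_iff.1 hK (η / 2) (half_pos hη)
  have h : ∀ t, ∃ y : S, dist (u t) y < η / 2 := by
    intro t
    obtain ⟨y, hy, hy'⟩ := Set.mem_iUnion₂.1 (hKS (hu t))
    exact ⟨⟨y, hy⟩, hy'⟩
  choose c hc using h
  have : Finite S := hS
  obtain ⟨n, ⟨e⟩⟩ := Finite.exists_equiv_fin S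
  refine ⟨Fin n, inferInstance, fun t => e (c t), fun s t hst => ?_⟩
  have hst' : c s = c t := e.injective hst
  have h1 := hc s
  have h2 := hc t
  rw [hst'] at h1
  calc dist (u s) (u t) ≤ dist (u s) (c t) + dist (u t) (c t) := dist_triangle_right _ _ _
    _ < η := by linarith

theorem isAP_wave (ω : ℝ) : IsAP (wave ω) where
  cont := continuous_wave ω
  fin ε hε := by
    obtain ⟨ι, hι, c, hc⟩ := exists_coloring (isCompact_sphere (0 : ℂ) 1).totallyBounded
      (wave ω) (fun t => by simp [norm_wave]) hε
    refine ⟨ι, hι, c, fun s t h x => ?_⟩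
    rw [wave_add, wave_add, ← mul_sub, norm_mul, norm_wave, one_mul, ← dist_eq_norm]
    exact (hc s t h).le

theorem IsAP.of_approx {f : ℝ → ℂ} (hf : Continuous f)
    (h : ∀ ε : ℝ, 0 < ε → ∃ g, IsAP g ∧ ∀ x, ‖f x - g x‖ ≤ ε) : IsAP f where
  cont := hf
  fin ε hε := by
    obtain ⟨g, hg, hfg⟩ := h (ε / 3) (by positivity)
    obtain ⟨ι, hι, c, hc⟩ := hg.fin (ε / 3) (by positivity)
    refine ⟨ι, hι, c, fun s t h x => ?_⟩
    have h1 := hc s t h x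
    have h2 := hfg (x + s)
    have h3 := hfg (x + t)
    rw [norm_sub_rev] at h3
    have h4 : f (x + s) - f (x + t) = (f (x + s) - g (x + s)) + (g (x + s) - g (x + t))
      + (g (x + t) - f (x + t)) := by ring
    rw [h4]
    exact (norm_add₃_le).trans (by linarith)

theorem IsAP.translate {f : ℝ → ℂ} (hf : IsAP f) (a : ℝ) : IsAP (fun x => f (x + a)) where
  cont := hf.cont.comp (by fun_prop)
  fin ε hε := by
    obtain ⟨ι, hι, c, hc⟩ := hf.fin ε hε
    refine ⟨ι, hι, c, fun s t h x => ?_⟩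
    rw [add_right_comm x s, add_right_comm x t]
    exact hc s t h (x + a)

theorem BohrAP.uniformContinuous {f : ℝ → ℂ} (hf : BohrAP f) : UniformContinuous f := by
  rw [Metric.uniformContinuous_iff]
  intro ε hε
  obtain ⟨L, hL, h⟩ := hf.2 (ε / 3) (by positivity)
  have huc := isCompact_Icc.uniformContinuousOn_of_continuous
    (s := Set.Icc (-(L + 2)) 2) hf.1.continuousOn
  rw [Metric.uniformContinuousOn_iff] at huc
  obtain ⟨δ, hδ, hd⟩ := huc (ε / 3) (by positivity)
  refine ⟨min δ 1, by positivity, fun {x y} hxy => ?_⟩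
  obtain ⟨τ, ⟨h1, h2⟩, hτ⟩ := h x
  have hxy1 := (abs_lt.1 (hxy.trans_le (min_le_right _ _)))
  have := hd (x - τ) ⟨by linarith, by linarith⟩ (y - τ) ⟨by linarith, by linarith⟩
    (by simpa using hxy.trans_le (min_le_left _ _))
  have h3 := hτ x
  have h4 := hτ y
  rw [norm_sub_rev, ← dist_eq_norm] at h3
  rw [← dist_eq_norm] at h4
  have := dist_triangle4 (f x) (f (x - τ)) (f (y - τ)) (f y)
  linarith

/-- Bohr's definition implies Bochner's. -/
theorem BohrAP.isAP {f : ℝ → ℂ} (hf : BohrAP f) : IsAP f where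
  cont := hf.1
  fin ε hε := by
    obtain ⟨L, hL, h⟩ := hf.2 (ε / 3) (by positivity)
    obtain ⟨δ, hδ, hd⟩ := Metric.uniformContinuous_iff.1 hf.uniformContinuous (ε / 3)
      (by positivity)
    -- Each shift `t` is moved by an almost period `τ t` into `[0, L]`, where uniform continuity
    -- leaves only finitely many classes.
    choose τ hτ hτ' using fun t => h (t - L)
    obtain ⟨ι, hι, c, hc⟩ := exists_coloring (isCompact_Icc (a := (0 : ℝ)) (b := L)).totallyBounded
      (fun t => t - τ t) (fun t => ⟨by linarith [(hτ t).2], by linarith [(hτ t).1]⟩) hδ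
    refine ⟨ι, hι, c, fun s t h x => ?_⟩
    have h1 := hτ' s (x + s)
    have h2 := hτ' t (x + t)
    have h3 := @hd (x + s - τ s) (x + t - τ t) (by
      have := hc s t h
      rw [Real.dist_eq] at this ⊢
      convert this using 2; ring)
    rw [norm_sub_rev, ← dist_eq_norm] at h1
    rw [← dist_eq_norm] at h2 ⊢
    have := dist_triangle4 (f (x + s)) (f (x + s - τ s)) (f (x + t - τ t)) (f (x + t))
    linarith

/-! ### Mean values -/

/-- `F` is continuous and has mean value `m`, the limit of its averages over `[-L, L]`. Continuity
is included so that all the integrals involved are genuine. -/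
def HasMean (F : ℝ → ℂ) (m : ℂ) : Prop := Continuous F ∧ Tendsto (symAvg F) atTop (𝓝 m)

/-- For long intervals, averages of an almost periodic function, and the modulus of those of its
products with a character, barely change under translation. The threshold is uniform in the shift
and the frequency: a finite net reduces to boundedly many shifts. -/
theorem IsAP.symAvg_translate {F : ℝ → ℂ} (hF : IsAP F) {ε : ℝ} (hε : 0 < ε) :
    ∃ L₀ : ℝ, 0 < L₀ ∧ ∀ L ≥ L₀, ∀ (a : ℝ) (ω : ℝ),
      |‖symAvg (fun x => F (x + a) * wave ω (x + a)) L‖ - ‖symAvg (fun x => F x * wave ω x) L‖| ≤ ε ∧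
      ‖symAvg (fun x => F (x + a)) L - symAvg F L‖ ≤ ε := by
  obtain ⟨C, hC, hFC⟩ := hF.bdd
  obtain ⟨ι, _, r, hr⟩ := hF.net (half_pos hε)
  have hcont := hF.cont
  set R := ∑ i, |r i| with hR
  have hR0 : 0 ≤ R := by positivity
  have hrR : ∀ i, |r i| ≤ R := fun i => Finset.single_le_sum (f := fun i => |r i|)
      (fun _ _ => by positivity) (Finset.mem_univ i)
  refine ⟨2 * C * (R + 1) / ε, by positivity, fun L hL a ω => ?_⟩
  have hL0 : 0 < L := lt_of_lt_of_le (by positivity) hL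
  obtain ⟨i, hi⟩ := hr a
  have hshift : C * |r i| / L ≤ ε / 2 := by
    rw [ge_iff_le, div_le_iff₀ hε] at hL
    rw [div_le_iff₀ hL0]
    have : C * |r i| ≤ C * R := by gcongr; exact hrR i
    nlinarith
  constructor
  · have h1 := norm_symAvg_shift_sub_le (F := fun x => F x * wave ω x) (by fun_prop) hL0
      (C := C) (fun x => by rw [norm_mul, norm_wave, mul_one]; exact hFC x) (r i)
    have h2 : ‖symAvg (fun x => F (x + a) * wave ω (x + a)) L‖
        = ‖symAvg (fun x => F (x + a) * wave ω x) L‖ := by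
      simp_rw [wave_add, mul_comm (wave ω _) (wave ω a), mul_left_comm _ (wave ω a)]
      rw [symAvg_const_mul, norm_mul, norm_wave, one_mul]
    have h3 : ‖symAvg (fun x => F (x + r i) * wave ω (x + r i)) L‖
        = ‖symAvg (fun x => F (x + r i) * wave ω x) L‖ := by
      simp_rw [wave_add, mul_comm (wave ω _) (wave ω (r i)), mul_left_comm _ (wave ω (r i))]
      rw [symAvg_const_mul, norm_mul, norm_wave, one_mul]
    have h4 := norm_symAvg_sub_le (F := fun x => F (x + a) * wave ω x)
      (G := fun x => F (x + r i) * wave ω x) (by fun_prop) (by fun_prop) hL0 (C := ε / 2)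
      (fun x => by rw [← sub_mul, norm_mul, norm_wave, mul_one]; exact hi x)
    have h5 := (abs_norm_sub_norm_le _ _).trans h1
    have h6 := (abs_norm_sub_norm_le _ _).trans h4
    rw [h2]
    rw [h3] at h5
    refine (abs_sub_le _ _ _).trans (add_le_add h6 (h5.trans hshift)) |>.trans (by linarith)
  · have h1 := norm_symAvg_shift_sub_le hF.cont hL0 hFC (r i)
    have h4 := norm_symAvg_sub_le (F := fun x => F (x + a))
      (G := fun x => F (x + r i)) (by fun_prop) (by fun_prop) hL0 (C := ε / 2) hi
    refine (norm_sub_le_norm_sub_add_norm_sub _ _ _).trans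
      (add_le_add h4 (h1.trans hshift)) |>.trans (by linarith)

theorem symAvg_const (c : ℂ) {L : ℝ} (hL : 0 < L) : symAvg (fun _ => c) L = c := by
  have : (L : ℂ) ≠ 0 := by exact_mod_cast hL.ne'
  simp only [symAvg, intervalIntegral.integral_const, Complex.real_smul]
  push_cast
  field_simp; ring

/-- The mean value of an almost periodic function exists, uniformly over translated intervals.
Averaging the length-`L` averages over `[-S, S]` gives, by Fubini, a quantity symmetric in `L` and
`S` that is close to both averages, so the averages are Cauchy. -/
theorem IsAP.exists_mean {F : ℝ → ℂ} (hF : IsAP F) : ∃ m, HasMean F m ∧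
    ∀ ε : ℝ, 0 < ε → ∃ L₀ : ℝ, 0 < L₀ ∧ ∀ L ≥ L₀, ∀ a, ‖symAvg (fun x => F (x + a)) L - m‖ ≤ ε := by
  have hcont := hF.cont
  have key : ∀ ε : ℝ, 0 < ε → ∃ L₀ : ℝ, 0 < L₀ ∧ ∀ L ≥ L₀, ∀ S ≥ L₀,
      ‖symAvg F L - symAvg F S‖ ≤ ε := by
    intro ε hε
    obtain ⟨L₀, hL₀, h⟩ := hF.symAvg_translate (half_pos hε)
    refine ⟨L₀, hL₀, fun L hL S hS => ?_⟩
    have main : ∀ L ≥ L₀, ∀ S > 0,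
        ‖symAvg (fun a => symAvg (fun x => F (x + a)) L) S - symAvg F L‖ ≤ ε / 2 := by
      intro L hL S hS
      have := norm_symAvg_sub_le (F := fun a => symAvg (fun x => F (x + a)) L)
        (G := fun _ => symAvg F L)
        (continuous_symAvg (G := fun a x => F (x + a)) (by fun_prop) L) continuous_const hS
        (fun a => (h L hL a 0).2)
      rwa [symAvg_const _ hS] at this
    have h1 := main L hL S (by linarith)
    have h2 := main S hS L (by linarith)
    rw [symAvg_swap (G := fun a x => F (x + a)) (by fun_prop)] at h1
    simp only [add_comm] at h1 h2
    rw [norm_sub_rev] at h1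
    exact (norm_sub_le_norm_sub_add_norm_sub _ _ _).trans (add_le_add h1 h2) |>.trans (by linarith)
  have hc : Cauchy (map (symAvg F) atTop) := by
    rw [Metric.cauchy_iff]
    refine ⟨inferInstance, fun ε hε => ?_⟩
    obtain ⟨L₀, hL₀, h⟩ := key (ε / 2) (half_pos hε)
    refine ⟨symAvg F '' Set.Ici L₀, image_mem_map (Ici_mem_atTop _), ?_⟩
    rintro _ ⟨L, hL, rfl⟩ _ ⟨S, hS, rfl⟩
    rw [dist_eq_norm]
    exact (h L hL S hS).trans_lt (half_lt_self hε)
  obtain ⟨m, hm⟩ := CompleteSpace.complete hc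
  refine ⟨m, ⟨hF.cont, hm⟩, fun ε hε => ?_⟩
  obtain ⟨L₀, hL₀, h⟩ := hF.symAvg_translate (half_pos hε)
  have hev := (Metric.tendsto_atTop.1 hm) (ε / 2) (half_pos hε)
  obtain ⟨L₁, hL₁⟩ := hev
  refine ⟨max L₀ L₁, by positivity, fun L hL a => ?_⟩
  have h1 := (h L (le_of_max_le_left hL) a 0).2
  have h2 := hL₁ L (le_of_max_le_right hL)
  rw [dist_eq_norm] at h2
  exact (norm_sub_le_norm_sub_add_norm_sub _ _ _).trans (add_le_add h1 h2.le)
    |>.trans (by linarith)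

namespace HasMean

variable {F G : ℝ → ℂ} {m n : ℂ}

theorem unique (h : HasMean F m) (h' : HasMean F n) : m = n := tendsto_nhds_unique h.2 h'.2

theorem uniform (h : HasMean F m) (hF : IsAP F) {ε : ℝ} (hε : 0 < ε) :
    ∃ L₀ : ℝ, 0 < L₀ ∧ ∀ L ≥ L₀, ∀ a, ‖symAvg (fun x => F (x + a)) L - m‖ ≤ ε := by
  obtain ⟨m', h1, h2⟩ := hF.exists_mean
  rw [h.unique h1]; exact h2 ε hε

theorem add (h : HasMean F m) (h' : HasMean G n) : HasMean (fun x => F x + G x) (m + n) :=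
  ⟨h.1.add h'.1, (h.2.add h'.2).congr fun L => (symAvg_add h.1 h'.1 L).symm⟩

theorem sub (h : HasMean F m) (h' : HasMean G n) : HasMean (fun x => F x - G x) (m - n) :=
  ⟨h.1.sub h'.1, (h.2.sub h'.2).congr fun L => (symAvg_sub h.1 h'.1 L).symm⟩

theorem const_mul (c : ℂ) (h : HasMean F m) : HasMean (fun x => c * F x) (c * m) :=
  ⟨continuous_const.mul h.1, (h.2.const_mul c).congr fun L => (symAvg_const_mul c F L).symm⟩

theorem _root_.HasMean.conj (h : HasMean F m) : HasMean (fun x => conj (F x)) (conj m) :=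
  ⟨Complex.continuous_conj.comp h.1,
    ((Complex.continuous_conj.tendsto m).comp h.2).congr fun L => (symAvg_conj F L).symm⟩

theorem const (c : ℂ) : HasMean (fun _ => c) c :=
  ⟨continuous_const, tendsto_const_nhds.congr' <| by
    filter_upwards [eventually_gt_atTop 0] with L hL using (symAvg_const c hL).symm⟩

theorem sum {ι : Type*} (s : Finset ι) {f : ι → ℝ → ℂ} {a : ι → ℂ}
    (h : ∀ i ∈ s, HasMean (f i) (a i)) : HasMean (fun x => ∑ i ∈ s, f i x) (∑ i ∈ s, a i) := by
  classical
  induction s using Finset.induction_on with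
  | empty => simpa using HasMean.const 0
  | insert b s hb ih =>
    simp only [Finset.sum_insert hb]
    exact (h b (by simp)).add (ih fun i hi => h i (by simp [hi]))

theorem norm_le (h : HasMean F m) {C : ℝ} (hC : ∀ x, ‖F x‖ ≤ C) : ‖m‖ ≤ C :=
  le_of_tendsto h.2.norm <| by
    filter_upwards [eventually_gt_atTop 0] with L hL using norm_symAvg_le hL hC

theorem translate (h : HasMean F m) (hF : IsAP F) (a : ℝ) : HasMean (fun x => F (x + a)) m := by
  refine ⟨h.1.comp (by fun_prop), Metric.tendsto_atTop.2 fun ε hε => ?_⟩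
  obtain ⟨L₀, _, h1⟩ := h.uniform hF (half_pos hε)
  exact ⟨L₀, fun L hL => by
    rw [dist_eq_norm]; exact (h1 L hL a).trans_lt (half_lt_self hε)⟩

theorem of_approx (hF : Continuous F)
    (h : ∀ ε : ℝ, 0 < ε → ∃ G n, HasMean G n ∧ (∀ x, ‖F x - G x‖ ≤ ε) ∧ ‖n - m‖ ≤ ε) :
    HasMean F m := by
  refine ⟨hF, Metric.tendsto_atTop.2 fun ε hε => ?_⟩
  obtain ⟨G, n, hG, h1, h2⟩ := h (ε / 4) (by positivity)
  obtain ⟨L₁, hL₁⟩ := Metric.tendsto_atTop.1 hG.2 (ε / 4) (by positivity)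
  refine ⟨max L₁ 1, fun L hL => ?_⟩
  have hL0 : 0 < L := zero_lt_one.trans_le (le_of_max_le_right hL)
  have h3 := hL₁ L (le_of_max_le_left hL)
  have h4 := norm_symAvg_sub_le hF hG.1 hL0 h1
  rw [← dist_eq_norm] at h2 h4
  have := dist_triangle4 (symAvg F L) (symAvg G L) n m
  linarith

end HasMean

theorem hasMean_wave (ω : ℝ) : HasMean (wave ω) (if ω = 0 then 1 else 0) := by
  split_ifs with h
  · subst h
    have : wave 0 = fun _ => 1 := funext wave_zero
    rw [this]; exact HasMean.const 1
  · obtain ⟨m, hm, -⟩ := (isAP_wave ω).exists_mean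
    have h1 := hm.translate (isAP_wave ω) (1 / (2 * ω))
    have h2 : (fun x => wave ω (x + 1 / (2 * ω))) = fun x => (-1) * wave ω x := by
      ext x
      rw [wave_add, mul_comm]
      congr 1
      rw [wave, show 2 * Real.pi * ω * (1 / (2 * ω)) = Real.pi by field_simp]
      exact Complex.exp_pi_mul_I
    rw [h2] at h1
    have h3 := h1.unique (hm.const_mul (-1))
    have h4 : m = 0 := by linear_combination h3 / 2
    rwa [h4] at hm

theorem symAvg_ofReal (g : ℝ → ℝ) (L : ℝ) :
    symAvg (fun x => (g x : ℂ)) L = (((2 * L)⁻¹ * ∫ x in (-L)..L, g x : ℝ) : ℂ) := by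
  rw [symAvg, intervalIntegral.integral_ofReal]; push_cast; rfl

theorem HasMean.re_nonneg {F : ℝ → ℂ} {m : ℂ} (h : HasMean F m) {g : ℝ → ℝ}
    (hFg : ∀ x, F x = g x) (hg : ∀ x, 0 ≤ g x) : 0 ≤ m.re := by
  refine ge_of_tendsto ((Complex.continuous_re.tendsto _).comp h.2) ?_
  filter_upwards [eventually_gt_atTop 0] with L hL
  rw [funext hFg, Function.comp, symAvg_ofReal, Complex.ofReal_re]
  exact mul_nonneg (by positivity)
    (intervalIntegral.integral_nonneg (by linarith) fun x _ => hg x)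

/-! ### Uniform decay of averages against characters -/

/-- The Riemann–Lebesgue lemma on a fixed interval. -/
theorem tendsto_symAvg_cocompact (h : ℝ → ℂ) {L : ℝ} (hL : 0 < L) :
    Tendsto (fun ω => ‖symAvg (fun x => h x * wave ω x) L‖) (cocompact ℝ) (𝓝 0) := by
  have h1 := Real.tendsto_integral_exp_smul_cocompact (Set.indicator (Set.Ioc (-L) L) h)
  have h2 := h1.comp (Homeomorph.neg ℝ).isClosedEmbedding.tendsto_cocompact
  have h3 := (h2.const_mul ((2 * (L : ℂ))⁻¹)).norm
  rw [mul_zero, norm_zero] at h3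
  refine h3.congr fun ω => ?_
  rw [symAvg, intervalIntegral.integral_of_le (by linarith), ← integral_indicator measurableSet_Ioc]
  refine congrArg norm (congrArg _ (integral_congr_ae (ae_of_all _ fun x => ?_)))
  by_cases hx : x ∈ Set.Ioc (-L) L
  · simp only [Set.indicator_of_mem hx, Homeomorph.coe_neg]
    rw [Circle.smul_def, smul_eq_mul, Real.fourierChar_apply, mul_comm, wave]
    congr 3
    push_cast; ring
  · simp only [Set.indicator_of_notMem hx, smul_zero]

/-- An average of `h * wave ω` over a sufficiently long fixed interval controls all later ones, with
thresholds that do not depend on `ω`. -/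
theorem IsAP.eventually_symAvg_le {h : ℝ → ℂ} (hh : IsAP h) {ε : ℝ} (hε : 0 < ε) :
    ∃ L₀ : ℝ, 0 < L₀ ∧ ∀ L ≥ L₀, ∀ᶠ T in atTop, ∀ ω,
      ‖symAvg (fun x => h x * wave ω x) T‖ ≤ ‖symAvg (fun x => h x * wave ω x) L‖ + 2 * ε := by
  obtain ⟨C, hC, hhC⟩ := hh.bdd
  have hcont := hh.cont
  obtain ⟨L₀, hL₀, hs⟩ := hh.symAvg_translate hε
  refine ⟨L₀, hL₀, fun L hL => ?_⟩
  have hL0 : 0 < L := by linarith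
  filter_upwards [eventually_ge_atTop (C * L / ε), eventually_gt_atTop 0] with T hT hT0 ω
  set D : ℝ → ℂ := fun x => h x * wave ω x with hD
  have hDc : Continuous D := by fun_prop
  have hDC : ∀ x, ‖D x‖ ≤ C := fun x => by rw [norm_mul, norm_wave, mul_one]; exact hhC x
  have h1 : ‖symAvg (fun a => symAvg (fun x => D (x + a)) L) T‖ ≤ ‖symAvg D L‖ + ε := by
    refine norm_symAvg_le hT0 fun a => ?_
    have := (abs_le.1 (hs L hL a ω).1).2
    simp only [hD]
    linarith
  rw [symAvg_swap (G := fun a x => D (x + a)) (by fun_prop)] at h1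
  have h2 : ‖symAvg (fun x => symAvg (fun a => D (x + a)) T) L - symAvg D T‖ ≤ ε := by
    rw [← symAvg_const (symAvg D T) hL0, ← symAvg_sub
      (continuous_symAvg (G := fun a x => D (a + x)) (by fun_prop) T) continuous_const]
    refine norm_symAvg_le_of_abs_le hL0 fun s hs => ?_
    simp only [add_comm s]
    refine (norm_symAvg_shift_sub_le hDc hT0 hDC s).trans ?_
    rw [div_le_iff₀ hT0]
    rw [div_le_iff₀ hε] at hT
    calc C * |s| ≤ C * L := by gcongr
      _ ≤ _ := by linarith
  rw [norm_sub_rev] at h2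
  have := norm_le_norm_add_norm_sub' (symAvg D T)
    (symAvg (fun x => symAvg (fun a => D (x + a)) T) L)
  linarith

/-- If all Fourier coefficients of `h` vanish, the averages of `h * wave ω` tend to `0` uniformly in
`ω`. -/
theorem IsAP.eventually_forall_symAvg_le {h : ℝ → ℂ} (hh : IsAP h)
    (h0 : ∀ ω, HasMean (fun x => h x * wave ω x) 0) {ε : ℝ} (hε : 0 < ε) :
    ∀ᶠ T in atTop, ∀ ω, ‖symAvg (fun x => h x * wave ω x) T‖ ≤ 3 * ε := by
  have hcont := hh.cont
  obtain ⟨L₀, hL₀, hL⟩ := hh.eventually_symAvg_le hε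
  obtain ⟨K, hK, hKs⟩ := mem_cocompact.1
    ((tendsto_symAvg_cocompact h hL₀).eventually_lt_const hε)
  have h1 : ∀ᶠ T in atTop, ∀ ω ∈ K, ‖symAvg (fun x => h x * wave ω x) T‖ ≤ 3 * ε := by
    refine hK.induction_on (p := fun s => ∀ᶠ T in atTop, ∀ ω ∈ s,
      ‖symAvg (fun x => h x * wave ω x) T‖ ≤ 3 * ε) (by simp) ?_ ?_ ?_
    · intro s t hst ht
      filter_upwards [ht] with T hT ω hω using hT ω (hst hω)
    · intro s t hs ht
      filter_upwards [hs, ht] with T hT hT' ω hω using hω.elim (hT ω) (hT' ω)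
    · intro ω _
      have hlim := (h0 ω).2.norm
      rw [norm_zero] at hlim
      obtain ⟨L, hLlt, hLge⟩ :=
        ((hlim.eventually_lt_const hε).and (eventually_ge_atTop L₀)).exists
      have hc : Continuous fun ω => ‖symAvg (fun x => h x * wave ω x) L‖ := by
        have := continuous_wave₂
        refine (continuous_symAvg (G := fun ω x => h x * wave ω x) ?_ L).norm
        exact (hh.cont.comp continuous_snd).mul this
      refine ⟨_, mem_nhdsWithin_of_mem_nhds
        ((isOpen_lt hc continuous_const).mem_nhds hLlt), ?_⟩
      filter_upwards [hL L hLge] with T hT ν hν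
      have := hT ν
      change ‖symAvg (fun x => h x * wave ν x) L‖ < ε at hν
      linarith
  filter_upwards [h1, hL L₀ le_rfl] with T hT hT' ω
  by_cases hω : ω ∈ K
  · exact hT ω hω
  · have h2 : ‖symAvg (fun x => h x * wave ω x) L₀‖ < ε := hKs hω
    linarith [hT' ω]

/-! ### The uniqueness theorem -/

/-- Arbitrarily large almost periods exist: two multiples of `N` share a colour, by pigeonhole. -/
theorem IsAP.exists_large_period {h : ℝ → ℂ} (hh : IsAP h) {ε : ℝ} (hε : 0 < ε) {N : ℝ}
    (hN : 0 < N) : ∃ P ≥ N, ∀ x, ‖h (x + P) - h x‖ ≤ ε := by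
  obtain ⟨ι, _, c, hc⟩ := hh.fin ε hε
  have key : ∀ a b : ℕ, a < b → c (a * N) = c (b * N) →
      ∃ P ≥ N, ∀ x, ‖h (x + P) - h x‖ ≤ ε := by
    intro a b hab heq
    refine ⟨(b - a) * N, ?_, fun x => ?_⟩
    · have : (a : ℝ) + 1 ≤ b := by exact_mod_cast hab
      nlinarith
    · have := hc _ _ heq.symm (x - a * N)
      convert this using 4 <;> ring
  obtain ⟨a, b, hab, heq⟩ := Finite.exists_ne_map_eq_of_infinite (fun k : ℕ => c (k * N))
  rcases lt_or_gt_of_ne hab with h1 | h1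
  · exact key a b h1 heq
  · exact key b a h1 heq.symm

theorem norm_sub_int_mul_le {h : ℝ → ℂ} {ε P : ℝ} (hP : ∀ x, ‖h (x + P) - h x‖ ≤ ε) (k : ℤ)
    (x : ℝ) : ‖h (x + k * P) - h x‖ ≤ |(k : ℝ)| * ε := by
  have nat : ∀ (n : ℕ) (x : ℝ), ‖h (x + n * P) - h x‖ ≤ n * ε := by
    intro n
    induction n with
    | zero => simp
    | succ n ih =>
      intro x
      have h1 := hP (x + n * P)
      have h2 := ih x
      have h3 : x + (n + 1 : ℕ) * P = x + n * P + P := by push_cast; ring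
      rw [h3]
      refine (norm_sub_le_norm_sub_add_norm_sub _ (h (x + n * P)) _).trans ?_
      push_cast; linarith
  obtain ⟨n, rfl | rfl⟩ := k.eq_nat_or_neg
  · simpa using nat n x
  · have := nat n (x - n * P)
    rw [norm_sub_rev]
    simpa [← sub_eq_add_neg] using this

/-- The Fourier coefficients of `g` restricted to `[-T, T)` and wrapped around the circle of length
`2 * T` are averages of `g` times a character. -/
theorem fourierCoeff_wrap (T : ℝ) [hT : Fact (0 < 2 * T)] (g : ℝ → ℂ) (n : ℤ) :
    fourierCoeff (liftIco (2 * T) (-T) g) n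
      = symAvg (fun x => g x * wave (-(n / (2 * T))) x) T := by
  rw [fourierCoeff_liftIco_eq, fourierCoeffOn_eq_integral, symAvg,
    show -T + 2 * T = T by ring, show T - -T = 2 * T by ring, one_div, Complex.real_smul]
  push_cast
  congr 1
  refine intervalIntegral.integral_congr fun x _ => ?_
  simp only [smul_eq_mul]
  rw [fourier_coe_apply, mul_comm, wave]
  congr 2
  push_cast
  ring

theorem measurable_wrap (T : ℝ) [hT : Fact (0 < 2 * T)] {g : ℝ → ℂ} (hg : Continuous g) :
    Measurable (liftIco (2 * T) (-T) g) := by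
  have : Measurable (equivIco (2 * T) (-T)) := (measurableEquivIco (2 * T) (-T)).measurable
  exact (hg.measurable.comp measurable_subtype_coe).comp this

theorem exists_rep (T : ℝ) [hT : Fact (0 < 2 * T)] (y : AddCircle (2 * T)) :
    ∃ x : ℝ, -T ≤ x ∧ x < T ∧ (x : AddCircle (2 * T)) = y := by
  have h1 := (equivIco (2 * T) (-T) y).2
  exact ⟨equivIco (2 * T) (-T) y, h1.1, by linarith [h1.2], coe_equivIco ..⟩

theorem wrap_coe (T : ℝ) [hT : Fact (0 < 2 * T)] (g : ℝ → ℂ) {x : ℝ} (h1 : -T ≤ x) (h2 : x < T) :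
    liftIco (2 * T) (-T) g (x : AddCircle (2 * T)) = g x :=
  liftIco_coe_apply ⟨h1, by linarith⟩

/-- If `2 * T` and `τ` are `ε`-almost periods of `h`, then `τ` is a `3 * ε`-almost period of the
wrapped function: returning to `[-T, T)` costs at most two steps of length `2 * T`. -/
theorem wrap_shift {h : ℝ → ℂ} {ε T : ℝ} [hT : Fact (0 < 2 * T)] (hε : 0 ≤ ε)
    (hP : ∀ x, ‖h (x + 2 * T) - h x‖ ≤ ε) {τ : ℝ} (hτT : |τ| ≤ 2 * T)
    (hτ : ∀ x, ‖h (x + τ) - h x‖ ≤ ε) (y : AddCircle (2 * T)) :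
    ‖liftIco (2 * T) (-T) h (y + (τ : AddCircle (2 * T))) - liftIco (2 * T) (-T) h y‖ ≤ 3 * ε := by
  have hT0 := hT.out
  obtain ⟨x, hx1, hx2, rfl⟩ := exists_rep T y
  obtain ⟨z, hz1, hz2, hz⟩ := exists_rep T ((x : AddCircle (2 * T)) + (τ : AddCircle (2 * T)))
  rw [← hz, wrap_coe T h hz1 hz2, wrap_coe T h hx1 hx2]
  obtain ⟨k, hk⟩ := (AddCircle.coe_eq_zero_iff (2 * T) (x := z - (x + τ))).1 (by
    rw [AddCircle.coe_sub, hz, AddCircle.coe_add, sub_self])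
  rw [zsmul_eq_mul] at hk
  have hz' : z = x + τ + k * (2 * T) := by linarith
  have hτ' := abs_le.1 hτT
  have hk2 : |(k : ℝ)| ≤ 2 := by
    rw [abs_le]
    constructor <;> nlinarith
  have h1 := norm_sub_int_mul_le hP k (x + τ)
  have h2 := hτ x
  rw [hz']
  refine (norm_sub_le_norm_sub_add_norm_sub _ (h (x + τ)) _).trans ?_
  nlinarith

/-- Comparison with a long circle: an almost periodic function with vanishing Fourier coefficients
has zero mean square. -/
theorem IsAP.mean_sq_eq_zero {h : ℝ → ℂ} (hh : IsAP h)
    (h0 : ∀ ω, HasMean (fun x => h x * wave ω x) 0) {m : ℂ}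
    (hm : HasMean (fun x => h x * conj (h x)) m) : m = 0 := by
  by_contra hne
  have hμ : 0 < ‖m‖ := norm_pos_iff.2 hne
  set μ := ‖m‖ with hμdef
  obtain ⟨C, hC, hhC⟩ := hh.bdd
  -- `ε` makes the loss `3 * ε * C` in `hnet` equal to `μ / 4`; `δ` makes the upper bound
  -- `K * (3 * δ) ^ 2 * C ^ 2` on the circle smaller than `(μ / 2) ^ 2`.
  have hε : 0 < μ / (12 * C) := by positivity
  obtain ⟨ε, hεdef⟩ : ∃ ε, ε = μ / (12 * C) := ⟨_, rfl⟩
  rw [← hεdef] at hε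
  obtain ⟨ι, _, r, hr⟩ := hh.net hε
  obtain ⟨K, hK⟩ : ∃ K : ℝ, K = Fintype.card ι := ⟨_, rfl⟩
  have hK0 : 0 ≤ K := by rw [hK]; positivity
  obtain ⟨δ, hδdef⟩ : ∃ δ, δ = μ / (12 * C * (K + 1)) := ⟨_, rfl⟩
  have hδ : 0 < δ := by rw [hδdef]; positivity
  set R := ∑ i, |r i| with hR
  have hrR : ∀ i, |r i| ≤ R := fun i => Finset.single_le_sum (f := fun i => |r i|)
      (fun _ _ => by positivity) (Finset.mem_univ i)
  have hev := ((hh.eventually_forall_symAvg_le h0 hδ).and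
    (hm.2.norm.eventually_const_le (u := 3 / 4 * μ) (by linarith)))
  obtain ⟨N, hN⟩ := eventually_atTop.1 hev
  have hR0 : 0 ≤ R := by positivity
  -- The period is chosen after the net, so `K` and `R` do not depend on it.
  obtain ⟨P, hPN, hP⟩ := hh.exists_large_period hε (N := 2 * (|N| + R + 1)) (by positivity)
  obtain ⟨T, rfl⟩ : ∃ T, P = 2 * T := ⟨P / 2, by ring⟩
  have hTN : N ≤ T := by linarith [le_abs_self N]
  have hTR : R ≤ T := by linarith [abs_nonneg N]
  have hT0 : 0 < T := by linarith [abs_nonneg N]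
  obtain ⟨hcoef, hmean⟩ := hN T hTN
  have : Fact (0 < 2 * T) := ⟨by linarith⟩
  set H := liftIco (2 * T) (-T) h with hH
  have hHm : Measurable H := measurable_wrap T hh.cont
  have hHC : ∀ y, ‖H y‖ ≤ C := fun y => by
    obtain ⟨x, h1, h2, rfl⟩ := exists_rep T y
    rw [hH, wrap_coe T h h1 h2]; exact hhC x
  have hHδ : ∀ n, ‖fourierCoeff H n‖ ≤ 3 * δ := fun n => by
    rw [hH, fourierCoeff_wrap]; exact hcoef _
  obtain ⟨hψm, hψC, hψ⟩ := circle_autocorr_le H hHm hHC hHδ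
  have hsq : 3 / 4 * μ ≤ ‖∫ x, H x * conj (H x) ∂haarAddCircle‖ := by
    have h1 := fourierCoeff_wrap T (fun x => h x * conj (h x)) 0
    simp only [Int.cast_zero, zero_div, neg_zero, wave_zero, mul_one] at h1
    rw [← h1] at hmean
    have e : liftIco (2 * T) (-T) (fun x => h x * conj (h x)) = fun y => H y * conj (H y) := rfl
    rw [e] at hmean
    simpa [fourierCoeff] using hmean
  have hinteg : ∀ t, Integrable (fun x => H (x + t) * conj (H x)) haarAddCircle := fun t => by
    refine Integrable.of_bound (C := C * C) ?_ (ae_of_all _ fun x => ?_)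
    · exact ((hHm.comp (measurable_add_const t)).mul
        (Complex.continuous_conj.measurable.comp hHm)).aestronglyMeasurable
    · rw [norm_mul, RCLike.norm_conj]
      gcongr <;> exact hHC _
  have hnet : ∀ t : AddCircle (2 * T), ∃ i,
      μ / 2 ≤ ‖∫ x, H (x + (t - (r i : AddCircle (2 * T)))) * conj (H x) ∂haarAddCircle‖ := by
    intro t
    obtain ⟨s, hs1, hs2, rfl⟩ := exists_rep T t
    obtain ⟨i, hi⟩ := hr s
    refine ⟨i, ?_⟩
    rw [← AddCircle.coe_sub]
    have hi1 := (abs_le.1 ((hrR i).trans hTR))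
    have hshift := wrap_shift hε.le hP (τ := s - r i) (abs_le.2 ⟨by linarith, by linarith⟩)
      (fun x => by
        have := hi (x - r i)
        convert this using 4 <;> ring)
    have h1 : ‖(∫ x, H (x + ((s - r i : ℝ) : AddCircle (2 * T))) * conj (H x) ∂haarAddCircle)
        - ∫ x, H x * conj (H x) ∂haarAddCircle‖ ≤ 3 * ε * C := by
      have h00 := hinteg 0
      simp only [add_zero] at h00
      rw [← integral_sub (hinteg _) h00]
      have := norm_integral_le_of_norm_le_const (μ := haarAddCircle)
        (f := fun x => H (x + ((s - r i : ℝ) : AddCircle (2 * T))) * conj (H x)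
          - H x * conj (H x)) (C := 3 * ε * C) (ae_of_all _ fun x => by
          rw [← sub_mul, norm_mul, RCLike.norm_conj]
          gcongr
          · exact hshift x
          · exact hHC x)
      simpa using this
    have h2 : 3 * ε * C = μ / 4 := by rw [hεdef]; field_simp; norm_num
    rw [norm_sub_rev] at h1
    have h3 := norm_le_norm_add_norm_sub' (∫ x, H x * conj (H x) ∂haarAddCircle)
      (∫ x, H (x + ((s - r i : ℝ) : AddCircle (2 * T))) * conj (H x) ∂haarAddCircle)
    linarith
  have hfin := circle_net_le _ hψm hψC (fun i => (r i : AddCircle (2 * T))) (by positivity) hnet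
  rw [← hK] at hfin
  have h5 : (μ / 2) ^ 2 ≤ K * ((3 * δ) ^ 2 * C ^ 2) := hfin.trans (by gcongr)
  have h6 : K * ((3 * δ) ^ 2 * C ^ 2) = μ ^ 2 / 16 * (K / (K + 1) ^ 2) := by
    rw [hδdef]; field_simp; ring
  have h7 : K / (K + 1) ^ 2 ≤ 1 := by
    rw [div_le_one (by positivity)]; nlinarith
  rw [h6] at h5
  nlinarith [sq_pos_of_pos hμ]

/-- The uniqueness theorem at the point `0`. If `h 0 ≠ 0`, a finite net of translates of `|h|²`
has sum bounded below by a positive constant, which contradicts zero mean square. -/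
theorem IsAP.eq_zero {h : ℝ → ℂ} (hh : IsAP h)
    (h0 : ∀ ω, HasMean (fun x => h x * wave ω x) 0) : h 0 = 0 := by
  by_contra hne
  have hpos : 0 < ‖h 0‖ := norm_pos_iff.2 hne
  obtain ⟨m, hm, -⟩ := (hh.mul hh.conj).exists_mean
  obtain rfl := hh.mean_sq_eq_zero h0 hm
  obtain ⟨ι, _, r, hr⟩ := hh.net (half_pos hpos)
  have h1 := HasMean.sum Finset.univ fun i (_ : i ∈ (Finset.univ : Finset ι)) =>
    hm.translate (hh.mul hh.conj) (-(r i))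
  have h2 := h1.sub (HasMean.const (((‖h 0‖ / 2) ^ 2 : ℝ) : ℂ))
  have h4 := h2.re_nonneg (g := fun x => ∑ i, ‖h (x + -(r i))‖ ^ 2 - (‖h 0‖ / 2) ^ 2)
    (fun x => by simp only [Complex.mul_conj']; push_cast; rfl) (fun x => by
      obtain ⟨i, hi⟩ := hr x
      have h5 := hi (-(r i))
      rw [neg_add_cancel, add_comm, norm_sub_rev] at h5
      have h6 := norm_le_norm_add_norm_sub' (h 0) (h (x + -(r i)))
      have h7 := Finset.single_le_sum (f := fun i => ‖h (x + -(r i))‖ ^ 2)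
        (fun _ _ => by positivity) (Finset.mem_univ i)
      have h8 : (‖h 0‖ / 2) ^ 2 ≤ ‖h (x + -(r i))‖ ^ 2 := by
        gcongr; linarith
      linarith)
  simp only [Finset.sum_const_zero, zero_sub, Complex.neg_re, Complex.ofReal_re] at h4
  nlinarith

/-! ### Autocorrelation and Fourier series of an almost periodic function -/

/-- The autocorrelation `φ` of `f`. Its Fourier coefficients are the squared moduli of those of `f`:
exchanging the two averages leaves `conj (f x * wave ω x)` times a translated average of
`f * wave ω`, and the latter is uniformly close to `a`. -/
theorem IsAP.exists_autocorr {f : ℝ → ℂ} (hf : IsAP f) (huc : UniformContinuous f) :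
    ∃ φ : ℝ → ℂ, IsAP φ ∧ (∀ t, HasMean (fun x => f (x + t) * conj (f x)) (φ t)) ∧
      ∀ ω a, HasMean (fun x => f x * wave ω x) a →
        HasMean (fun t => φ t * wave ω t) (conj a * a) := by
  obtain ⟨C, hC, hfC⟩ := hf.bdd
  have hcont := hf.cont
  have hconj : Continuous fun x => conj (f x) := hf.conj.cont
  choose φ hφ using fun t => ((hf.translate t).mul hf.conj).exists_mean
  have hφm := fun t => (hφ t).1
  have hlip : ∀ s t η, (∀ x, ‖f (x + s) - f (x + t)‖ ≤ η) → ‖φ s - φ t‖ ≤ η * C := by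
    intro s t η h
    refine ((hφm s).sub (hφm t)).norm_le fun x => ?_
    rw [← sub_mul, norm_mul, RCLike.norm_conj]
    have := (norm_nonneg _).trans (h x)
    gcongr
    · exact h x
    · exact hfC x
  have hφC : ∀ t, ‖φ t‖ ≤ C * C := fun t => (hφm t).norm_le fun x => by
    rw [norm_mul, RCLike.norm_conj]
    gcongr <;> exact hfC _
  have hφc : Continuous φ := by
    rw [Metric.continuous_iff]
    intro t ε hε
    obtain ⟨δ, hδ, hd⟩ := Metric.uniformContinuous_iff.1 huc (ε / (2 * C)) (by positivity)
    refine ⟨δ, hδ, fun s hst => ?_⟩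
    rw [dist_eq_norm]
    have := hlip s t (ε / (2 * C)) fun x => by
      rw [← dist_eq_norm]
      exact (hd (by simpa using hst)).le
    have e : ε / (2 * C) * C = ε / 2 := by field_simp
    linarith
  have hφAP : IsAP φ := by
    refine ⟨hφc, fun ε hε => ?_⟩
    obtain ⟨ι, hι, c, hc⟩ := hf.fin (ε / C) (by positivity)
    refine ⟨ι, hι, c, fun s t h x => ?_⟩
    have := hlip (x + s) (x + t) (ε / C) fun y => by
      rw [← add_assoc, ← add_assoc]; exact hc s t h (y + x)
    rwa [div_mul_cancel₀ _ hC.ne'] at this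
  refine ⟨φ, hφAP, hφm, fun ω a ha => ⟨by fun_prop, Metric.tendsto_atTop.2 fun ε hε => ?_⟩⟩
  obtain ⟨L₀, hL₀, hu⟩ := ha.uniform (hf.mul (isAP_wave ω)) (ε := ε / (2 * C)) (by positivity)
  refine ⟨L₀, fun L hL => ?_⟩
  have hL0 : 0 < L := by linarith
  set D : ℝ → ℂ := fun x => f x * wave ω x with hD
  have hDc : Continuous D := by fun_prop
  -- For fixed `L`, the inner mean `φ t` is a limit of averages over `[-S, S]`.
  have hlim1 : Tendsto (fun S => symAvg (fun t =>
      symAvg (fun x => f (x + t) * conj (f x) * wave ω t) S) L) atTop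
      (𝓝 (symAvg (fun t => φ t * wave ω t) L)) := by
    refine Tendsto.const_mul _ ?_
    refine intervalIntegral.tendsto_integral_filter_of_dominated_convergence (fun _ => C * C)
      (Eventually.of_forall fun S => (continuous_symAvg
        (G := fun t x => f (x + t) * conj (f x) * wave ω t) ?_ S).aestronglyMeasurable)
      ?_ (by simp) (ae_of_all _ fun t _ => ?_)
    · have := continuous_wave ω
      simp only [Function.uncurry_def]
      fun_prop
    · filter_upwards [eventually_gt_atTop 0] with S hS
      refine ae_of_all _ fun t _ => norm_symAvg_le hS fun x => ?_
      rw [norm_mul, norm_mul, RCLike.norm_conj, norm_wave, mul_one]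
      gcongr <;> exact hfC _
    · have := ((hφm t).const_mul (wave ω t)).2
      simpa only [mul_comm] using this
  have hconjD : Continuous fun x => conj (D x) := Complex.continuous_conj.comp hDc
  have hlim2 := (ha.conj.const_mul a).2
  have hle : ‖symAvg (fun t => φ t * wave ω t) L - a * conj a‖ ≤ ε / 2 := by
    refine le_of_tendsto (hlim1.sub hlim2).norm ?_
    filter_upwards [eventually_gt_atTop 0] with S hS
    rw [symAvg_swap (G := fun t x => f (x + t) * conj (f x) * wave ω t) (by
      simp only [Function.uncurry_def]; fun_prop)]
    have e : ∀ x, symAvg (fun t => f (x + t) * conj (f x) * wave ω t) L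
        = conj (D x) * symAvg (fun t => D (t + x)) L := by
      intro x
      rw [← symAvg_const_mul]
      congr 1
      ext t
      simp only [hD, map_mul, conj_wave]
      have : wave ω t = wave (-ω) x * wave ω (t + x) := by
        rw [wave_add, mul_comm, mul_assoc, wave_mul, add_neg_cancel, wave_zero, mul_one]
      rw [this, add_comm x t]; ring
    simp only [e]
    refine norm_symAvg_sub_le (hconjD.mul
      (continuous_symAvg (G := fun x t => D (t + x)) (by fun_prop) L))
      (continuous_const.mul hconjD) hS fun x => ?_
    simp only [Pi.mul_apply]
    rw [mul_comm a, ← mul_sub, norm_mul, RCLike.norm_conj]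
    calc _ ≤ C * (ε / (2 * C)) := by
          gcongr
          · rw [hD, norm_mul, norm_wave, mul_one]; exact hfC x
          · exact hu L hL x
      _ = ε / 2 := by field_simp
  rw [dist_eq_norm, mul_comm (conj a)]
  linarith

theorem hasMean_trigPoly (F : Finset ℝ) (a : ℝ → ℂ) (ν : ℝ) :
    HasMean (fun x => (∑ ω ∈ F, a ω * wave ω x) * wave (-ν) x) (if ν ∈ F then a ν else 0) := by
  have h := HasMean.sum F fun ω (_ : ω ∈ F) => (hasMean_wave (ω + -ν)).const_mul (a ω)
  convert h using 1
  · ext x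
    rw [Finset.sum_mul]
    exact Finset.sum_congr rfl fun ω _ => by rw [mul_assoc, wave_mul]
  · simp only [← sub_eq_add_neg, sub_eq_zero, mul_ite, mul_one, mul_zero, Finset.sum_ite_eq']

/-- Bessel's inequality, from `0 ≤ M (|f - p|²)` for the partial Fourier sum `p`. -/
theorem bessel {f : ℝ → ℂ} {a : ℝ → ℂ}
    (ha : ∀ ω, HasMean (fun x => f x * wave (-ω) x) (a ω)) {m : ℂ}
    (hm : HasMean (fun x => f x * conj (f x)) m) (F : Finset ℝ) :
    ∑ ω ∈ F, ‖a ω‖ ^ 2 ≤ m.re := by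
  set p : ℝ → ℂ := fun x => ∑ ω ∈ F, a ω * wave ω x with hp
  have hpair : ∀ {q : ℝ → ℂ} {b : ℝ → ℂ}, (∀ ω ∈ F, HasMean (fun x => q x * wave (-ω) x) (b ω)) →
      HasMean (fun x => q x * conj (p x)) (∑ ω ∈ F, conj (a ω) * b ω) := by
    intro q b hq
    convert HasMean.sum F fun ω hω => (hq ω hω).const_mul (conj (a ω)) using 1
    ext x
    rw [hp, map_sum, Finset.mul_sum]
    exact Finset.sum_congr rfl fun ω _ => by rw [map_mul, conj_wave]; ring
  have h1 := hpair fun ω _ => ha ω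
  have h2 := hpair (q := p) (b := a) fun ω hω => by
    have := hasMean_trigPoly F a ω
    rwa [if_pos hω] at this
  have h3 := ((hm.sub h1).sub h1.conj).add h2
  have h4 := h3.re_nonneg (g := fun x => ‖f x - p x‖ ^ 2) (fun x => by
    push_cast
    rw [← Complex.mul_conj']
    simp only [map_mul, map_sub, Complex.conj_conj]
    ring) (fun x => by positivity)
  have e : ∑ ω ∈ F, conj (a ω) * a ω = ((∑ ω ∈ F, ‖a ω‖ ^ 2 : ℝ) : ℂ) := by
    push_cast
    exact Finset.sum_congr rfl fun ω _ => by rw [Complex.conj_mul']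
  rw [e, Complex.conj_ofReal] at h4
  simp only [Complex.add_re, Complex.sub_re, Complex.ofReal_re] at h4
  linarith

/-- An absolutely convergent trigonometric series is almost periodic, and its Fourier coefficients
are the given ones. -/
theorem isAP_waveSeries {b : ℝ → ℝ} (hb0 : ∀ ω, 0 ≤ b ω) (hb : Summable b) :
    IsAP (fun x => ∑' ω, (b ω : ℂ) * wave ω x) ∧
      ∀ ν, HasMean (fun x => (∑' ω, (b ω : ℂ) * wave ω x) * wave (-ν) x) (b ν) := by
  have hle : ∀ ω x, ‖(b ω : ℂ) * wave ω x‖ ≤ b ω := fun ω x => by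
    rw [norm_mul, norm_wave, mul_one, Complex.norm_real, Real.norm_of_nonneg (hb0 ω)]
  have hcont : Continuous (fun x => ∑' ω, (b ω : ℂ) * wave ω x) :=
    continuous_tsum (fun ω => by fun_prop) hb hle
  have hunif := Metric.tendstoUniformly_iff.1 (tendstoUniformly_tsum hb hle)
  refine ⟨IsAP.of_approx hcont fun ε hε => ?_, fun ν => HasMean.of_approx (by fun_prop)
    fun ε hε => ?_⟩
  · obtain ⟨F, hF⟩ := (hunif ε hε).exists
    exact ⟨_, IsAP.sum F _ fun ω => (IsAP.const (b ω)).mul (isAP_wave ω), fun x => by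
      rw [← dist_eq_norm]; exact (hF x).le⟩
  · obtain ⟨F, hF, hν⟩ := ((hunif ε hε).and (eventually_ge_atTop {ν})).exists
    refine ⟨_, _, hasMean_trigPoly F (fun ω => (b ω : ℂ)) ν, fun x => ?_, ?_⟩
    · rw [← sub_mul, norm_mul, norm_wave, mul_one, ← dist_eq_norm]; exact (hF x).le
    · rw [if_pos (by simpa using hν), sub_self, norm_zero]; exact hε.le

/-! ### Parseval's identity -/

/-- Bessel/Parseval for Bohr almost periodic functions. -/
theorem bohrAP_parseval (f : ℝ → ℂ) (hf : BohrAP f) (Fhat : ℝ → ℂ)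
    (hFhat : ∀ ω : ℝ, HasFourierCoeff f ω (Fhat ω)) :
    Summable (fun ω : ℝ => ‖Fhat ω‖ ^ 2) ∧
    Tendsto (fun L : ℝ => (2 * L)⁻¹ * ∫ x in (-L)..L, ‖f x‖ ^ 2) atTop
      (nhds (∑' ω : ℝ, ‖Fhat ω‖ ^ 2)) ∧
    {ω : ℝ | Fhat ω ≠ 0}.Countable := by
  have hAP := hf.isAP
  have ha : ∀ ω, HasMean (fun x => f x * wave (-ω) x) (Fhat ω) := by
    intro ω
    have hc := hf.1
    refine ⟨by fun_prop, (hFhat ω).congr fun L => ?_⟩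
    simp only [symAvg, wave]
    congr 5
    ext x
    congr 4
    ring
  obtain ⟨φ, hφ, hφm, hφc⟩ := hAP.exists_autocorr hf.uniformContinuous
  have hm : HasMean (fun x => f x * conj (f x)) (φ 0) := by simpa using hφm 0
  have hsum : Summable (fun ω : ℝ => ‖Fhat ω‖ ^ 2) :=
    summable_of_sum_le (fun ω => by positivity) (bessel ha hm)
  obtain ⟨hg, hgc⟩ := isAP_waveSeries (fun ω => by positivity) hsum
  -- Uniqueness applied to `φ - g`, where `g` is the series of the squared coefficients.
  have h0 := (hφ.add ((IsAP.const (-1)).mul hg)).eq_zero fun ω => by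
    have h1 := hφc ω (Fhat (-ω)) (by simpa using ha (-ω))
    have h2 := h1.sub (hgc (-ω))
    rw [neg_neg, Complex.conj_mul'] at h2
    push_cast at h2
    rw [sub_self] at h2
    convert h2 using 2 with x
    push_cast
    ring
  simp only [wave_zero_right, mul_one, ← Complex.ofReal_tsum] at h0
  have h3 : φ 0 = ((∑' ω : ℝ, ‖Fhat ω‖ ^ 2 : ℝ) : ℂ) := by linear_combination h0
  refine ⟨hsum, ?_, ?_⟩
  · rw [h3] at hm
    have h4 := (Complex.continuous_re.tendsto _).comp hm.2
    rw [Complex.ofReal_re] at h4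
    refine h4.congr fun L => ?_
    have h5 : (fun x => f x * conj (f x)) = fun x => ((‖f x‖ ^ 2 : ℝ) : ℂ) := by
      ext x; rw [Complex.mul_conj']; push_cast; rfl
    rw [Function.comp, h5, symAvg_ofReal, Complex.ofReal_re]
  · have h6 := hsum.countable_support
    refine h6.mono fun ω hω => ?_
    simpa using hω
end
end
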